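/- arXiv:1704.05707 — 3 statements merged into one kernel-verified Lean document; each statement's English description precedes it below -/
import Mathlib

section
/- Suppose 𝒟 is a positive integer-valued random variable with E[𝒟^{2+η}] < ∞ for some 0 < η < 1, and let (D_1, …, D_n) = IID(𝒟). Then for any 0 < ε ≤ η/(2(η+2)), the probability P(max{d₁(f_n, f), d₁(f_n^*, f^*)} > n^{-ε}) is O(n^{-ε}) as n → ∞, where f is the density of 𝒟 and f^*(k) = k f(k)/E[𝒟] its size-biased version. -/
open MeasureTheory Filter
open scoped ENNReal NNReal BigOperators

namespace ANNDPaper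

/-- A function is slowly varying if `l (λ x) / l x → 1` as `x → ∞` for every `λ > 0`. -/
def SlowlyVarying (l : ℝ → ℝ) : Prop :=
  ∀ lam : ℝ, 0 < lam → Tendsto (fun x => l (lam * x) / l x) atTop (nhds 1)

/-- A function is eventually monotone if it is monotone on some interval `[K, ∞)`. -/
def EventuallyMonotone (l : ℝ → ℝ) : Prop :=
  ∃ K : ℝ, MonotoneOn l (Set.Ici K) ∨ AntitoneOn l (Set.Ici K)

/-- Cumulative distribution function of a mass function on `ℕ`. -/
noncomputable def cdfOf (f : ℕ → ℝ) (k : ℕ) : ℝ := ∑ j ∈ Finset.range (k + 1), f j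

/-- Kantorovich–Rubinstein distance between two mass functions on `ℕ`,
valued in `ℝ≥0∞`. -/
noncomputable def d1 (f g : ℕ → ℝ) : ℝ≥0∞ :=
  ∑' k : ℕ, ENNReal.ofReal |cdfOf f k - cdfOf g k|

/-- Total variation distance between two mass functions on `ℕ`, valued in `ℝ≥0∞`. -/
noncomputable def dtv (f g : ℕ → ℝ) : ℝ≥0∞ :=
  (∑' k : ℕ, ENNReal.ofReal |f k - g k|) / 2

/-- Mean of a mass function on `ℕ`. -/
noncomputable def meanPMF (f : ℕ → ℝ) : ℝ := ∑' k : ℕ, (k : ℝ) * f k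

/-- Size-biased version `f^*(k) = k f(k) / E[f]` of a mass function on `ℕ`. -/
noncomputable def sizeBiased (f : ℕ → ℝ) (k : ℕ) : ℝ := (k : ℝ) * f k / meanPMF f

/-- `L_n`, the sum of the degrees. -/
def degSum {n : ℕ} (d : Fin n → ℕ) : ℕ := ∑ i, d i

/-- Empirical degree density `f_n(k)`. -/
noncomputable def empDens {n : ℕ} (d : Fin n → ℕ) (k : ℕ) : ℝ :=
  (∑ i, if d i = k then (1 : ℝ) else 0) / (n : ℝ)

/-- Size-biased empirical degree density `f_n^*(k)`. -/
noncomputable def empSB {n : ℕ} (d : Fin n → ℕ) (k : ℕ) : ℝ :=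
  (∑ i, if d i = k then (k : ℝ) else 0) / (degSum d : ℝ)

/-- Size-biased empirical cumulative distribution function `F_n^*(ℓ)`. -/
noncomputable def empSBcdf {n : ℕ} (d : Fin n → ℕ) (l : ℕ) : ℝ :=
  (∑ i, if d i ≤ l then (d i : ℝ) else 0) / (degSum d : ℝ)

/-- Empirical joint degree distribution `h_n(k, ℓ)` of a multigraph with degrees `d`
and edge counts `g` (self-loops counted twice). -/
noncomputable def jointDens {n : ℕ} (d : Fin n → ℕ) (g : Fin n → Fin n → ℕ) (k l : ℕ) : ℝ :=
  (∑ i, ∑ j, if d i = k ∧ d j = l then (g i j : ℝ) else 0) / (degSum d : ℝ)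

/-- Average nearest neighbor degree `Φ_n(k)`. -/
noncomputable def ANND {n : ℕ} (d : Fin n → ℕ) (g : Fin n → Fin n → ℕ) (k : ℕ) : ℝ :=
  if 0 < empDens d k then (∑' l : ℕ, jointDens d g k l * (l : ℝ)) / empSB d k else 0

/-- Average nearest neighbor rank `Θ_n(k)`. -/
noncomputable def ANNR {n : ℕ} (d : Fin n → ℕ) (g : Fin n → Fin n → ℕ) (k : ℕ) : ℝ :=
  if 0 < empDens d k then (∑' l : ℕ, jointDens d g k l * empSBcdf d l) / empSB d k else 0

/-- The degree of node `i` in a multigraph with edge counts `g` (self-loops counted twice). -/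
def degOf {n : ℕ} (g : Fin n → Fin n → ℕ) (i : Fin n) : ℕ := ∑ j, g i j

/-- Erased edge counts: self-loops removed, multiple edges merged. -/
def erase {n : ℕ} (g : Fin n → Fin n → ℕ) (i j : Fin n) : ℕ :=
  if i = j then 0 else min (g i j) 1

/-- Degrees after erasure. -/
def eraseDeg {n : ℕ} (g : Fin n → Fin n → ℕ) (i : Fin n) : ℕ := ∑ j, erase g i j

/-- The stubs (half-edges) attached to the nodes, given a degree sequence `d`. -/
abbrev Stubs {n : ℕ} (d : Fin n → ℕ) : Type := (i : Fin n) × Fin (d i)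

/-- A perfect matching of the stubs: a fixed-point-free involution. -/
def Matching {n : ℕ} (d : Fin n → ℕ) : Type :=
  {σ : Equiv.Perm (Stubs d) // ∀ s, σ s ≠ s ∧ σ (σ s) = s}

instance {n : ℕ} (d : Fin n → ℕ) : MeasurableSpace (Matching d) := ⊤

/-- The uniform probability measure on perfect matchings of the stubs. -/
noncomputable def uniformMatching {n : ℕ} (d : Fin n → ℕ) : Measure (Matching d) :=
  (Nat.card (Matching d) : ℝ≥0∞)⁻¹ • Measure.count

/-- The edge counts `G_{ij}` of the configuration-model multigraph determined by a
matching of the stubs: the number of stubs of `i` matched to stubs of `j`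
(self-loops are automatically counted twice). -/
def cmEdges {n : ℕ} (d : Fin n → ℕ) (σ : Matching d) (i j : Fin n) : ℕ :=
  (Finset.univ.filter (fun s : Fin (d i) => ((σ.1 ⟨i, s⟩).1 = j))).card

/-- Parity correction: add `1` to the last coordinate if the total sum is odd,
making the total even. -/
def parityFix (n : ℕ) (x : Fin n → ℕ) (i : Fin n) : ℕ :=
  if (i : ℕ) = n - 1 ∧ (∑ j, x j) % 2 = 1 then x i + 1 else x i

/-- The law of the degree sequence `IID(𝒟)` of length `n`, where `ν` is the law of `𝒟`:
i.i.d. samples with the last one corrected for parity. -/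
noncomputable def iidLaw (n : ℕ) (ν : Measure ℕ) : Measure (Fin n → ℕ) :=
  Measure.map (parityFix n) (Measure.pi fun _ : Fin n => ν)

/-- The joint law of (degree sequence, edge counts) in the configuration model of size `n`
with degree sequence `IID(𝒟)`, where `ν` is the law of `𝒟`: sample the degrees, then an
independent uniform perfect matching of the stubs. -/
noncomputable def cmLaw (n : ℕ) (ν : Measure ℕ) :
    Measure ((Fin n → ℕ) × (Fin n → Fin n → ℕ)) :=
  (iidLaw n ν).bind fun d => (uniformMatching d).map fun σ => (d, cmEdges d σ)

/-!
Both distances are controlled by tail sums. Since `cdfOf f k = 1 - E[1{𝒟 > k}]`, and similarly for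
the size-biased law up to dividing by a mean that is at least `1`, it suffices to bound the
expectation of `∑ₖ |(1/n) ∑ᵢ g(Dᵢ) 1{Dᵢ > k} - E[g(𝒟) 1{𝒟 > k}]|` for the weights `g = 1` and
`g(x) = x`. For `k` below a cutoff `K` the fluctuations are bounded through the variance, and beyond
`K` the triangle inequality leaves a tail of size `K^{-η} E[𝒟^{2+η}]`. The two contributions balance
at `K ≈ n^{1/(2+η)}`, which gives the rate `n^{-η/(2+η)}`. The parity correction changes a single
degree by at most one and costs only `O(1/n)`. Markov's inequality at the level `n^{-ε}` then
bounds the probability by a multiple of `n^{ε - η/(2+η)}`, which is at most `n^{-ε}`.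
-/

section EmpiricalMean

open ProbabilityTheory

variable {α : Type*} {n : ℕ}

/-- The empirical mean `(1/n) ∑ᵢ h(xᵢ)` of `h` along a sample `x` of size `n`; it is `0` for
`n = 0`. -/
noncomputable def empMean (h : α → ℝ) (x : Fin n → α) : ℝ := (∑ i, h (x i)) / n

lemma empMean_update (h : α → ℝ) (x : Fin n → α) (i : Fin n) (y : α) :
    empMean h (Function.update x i y) = empMean h x + (h y - h (x i)) / n := by
  have hsum : ∑ j, h (Function.update x i y j) = ∑ j, h (x j) + (h y - h (x i)) := by
    simp_rw [← Finset.add_sum_erase _ _ (Finset.mem_univ i), Function.update_self]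
    rw [Finset.sum_congr rfl fun j hj => by rw [Function.update_of_ne (Finset.ne_of_mem_erase hj)]]
    ring
  rw [empMean, empMean, hsum, add_div]

lemma enorm_empMean_le (h : α → ℝ) (x : Fin n → α) : ‖empMean h x‖ₑ ≤ (∑ i, ‖h (x i)‖ₑ) / n := by
  rcases eq_or_ne n 0 with rfl | hn
  · simp [empMean]
  rw [empMean, div_eq_mul_inv, enorm_mul, enorm_inv (by positivity), Real.enorm_natCast,
    ← div_eq_mul_inv]
  gcongr
  exact enorm_sum_le _ _

variable [MeasurableSpace α] {ν : Measure α} [IsProbabilityMeasure ν]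

lemma lintegral_comp_eval_pi {φ : α → ℝ≥0∞} (hφ : Measurable φ) (i : Fin n) :
    ∫⁻ x, φ (x i) ∂Measure.pi (fun _ : Fin n => ν) = ∫⁻ y, φ y ∂ν :=
  (measurePreserving_eval (fun _ : Fin n => ν) i).lintegral_comp hφ

lemma lintegral_enorm_empMean_sub_le {h : α → ℝ} (hh : Measurable h) :
    ∫⁻ x, ‖empMean h x - ∫ y, h y ∂ν‖ₑ ∂Measure.pi (fun _ : Fin n => ν)
      ≤ 2 * ∫⁻ y, ‖h y‖ₑ ∂ν := by
  have hmean : ∫⁻ x, (∑ i, ‖h (x i)‖ₑ) / n ∂Measure.pi (fun _ : Fin n => ν)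
      ≤ ∫⁻ y, ‖h y‖ₑ ∂ν := by
    simp_rw [div_eq_mul_inv]
    rw [lintegral_mul_const _ (by fun_prop), lintegral_finsetSum _ (by fun_prop)]
    simp_rw [lintegral_comp_eval_pi hh.enorm]
    rw [Finset.sum_const, Finset.card_fin, nsmul_eq_mul, mul_right_comm]
    exact mul_le_of_le_one_left' (ENNReal.mul_inv_le_one _)
  calc ∫⁻ x, ‖empMean h x - ∫ y, h y ∂ν‖ₑ ∂Measure.pi (fun _ : Fin n => ν)
      ≤ ∫⁻ x, ((∑ i, ‖h (x i)‖ₑ) / n + ∫⁻ y, ‖h y‖ₑ ∂ν) ∂Measure.pi (fun _ : Fin n => ν) := by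
        gcongr with x
        exact enorm_sub_le.trans
          (add_le_add (enorm_empMean_le h x) (enorm_integral_le_lintegral_enorm h))
    _ ≤ 2 * ∫⁻ y, ‖h y‖ₑ ∂ν := by
        rw [lintegral_add_right _ measurable_const, lintegral_const, measure_univ, mul_one, two_mul]
        gcongr

lemma integral_empMean {h : α → ℝ} (hh : Integrable h ν) (hn : n ≠ 0) :
    ∫ x, empMean h x ∂Measure.pi (fun _ : Fin n => ν) = ∫ y, h y ∂ν := by
  simp_rw [empMean]
  rw [integral_div, integral_finsetSum _ fun i _ => integrable_comp_eval hh]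
  simp_rw [integral_comp_eval (μ := fun _ : Fin n => ν) hh.aestronglyMeasurable]
  rw [Finset.sum_const, Finset.card_fin, nsmul_eq_mul, mul_div_cancel_left₀ _ (by positivity)]

lemma memLp_empMean {h : α → ℝ} {p : ℝ≥0∞} (hh : MemLp h p ν) :
    MemLp (empMean h) p (Measure.pi fun _ : Fin n => ν) := by
  have hsum : MemLp (fun x : Fin n → α => ∑ i, h (x i)) p (Measure.pi fun _ => ν) :=
    memLp_finsetSum _ fun i _ => hh.comp_measurePreserving (measurePreserving_eval _ i)
  unfold empMean
  simpa only [div_eq_inv_mul] using hsum.const_mul (n : ℝ)⁻¹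

lemma variance_empMean {h : α → ℝ} (hh : MemLp h 2 ν) :
    Var[empMean h; Measure.pi fun _ : Fin n => ν] = Var[h; ν] / n := by
  have hmul : empMean h =
      fun x : Fin n → α => (n : ℝ)⁻¹ * (∑ i, fun y : Fin n → α => h (y i)) x := by
    ext x
    rw [empMean, Finset.sum_apply, div_eq_inv_mul]
  rw [hmul, variance_const_mul, variance_sum_pi fun _ => hh, Finset.sum_const, Finset.card_fin,
    nsmul_eq_mul]
  field_simp

lemma evariance_le_lintegral_enorm_sq {h : α → ℝ} (hh : MemLp h 2 ν) :
    eVar[h; ν] ≤ ∫⁻ y, ‖h y‖ₑ ^ 2 ∂ν := by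
  have hsq : ENNReal.ofReal (∫ y, h y ^ 2 ∂ν) = ∫⁻ y, ‖h y‖ₑ ^ 2 ∂ν := by
    rw [ofReal_integral_eq_lintegral_ofReal hh.integrable_sq (ae_of_all _ fun y => sq_nonneg _)]
    simp_rw [← enorm_pow, Real.enorm_of_nonneg (sq_nonneg _)]
  rw [← ofReal_variance hh, ← hsq]
  exact ENNReal.ofReal_le_ofReal (variance_le_expectation_sq hh.aestronglyMeasurable)

lemma lintegral_enorm_empMean_sub_sq_le {h : α → ℝ} (hh : MemLp h 2 ν) (hn : n ≠ 0) :
    ∫⁻ x, ‖empMean h x - ∫ y, h y ∂ν‖ₑ ^ 2 ∂Measure.pi (fun _ : Fin n => ν)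
      ≤ (∫⁻ y, ‖h y‖ₑ ^ 2 ∂ν) / n := by
  calc ∫⁻ x, ‖empMean h x - ∫ y, h y ∂ν‖ₑ ^ 2 ∂Measure.pi (fun _ : Fin n => ν)
      = eVar[empMean h; Measure.pi fun _ : Fin n => ν] := by
        rw [evariance, integral_empMean (hh.integrable one_le_two) hn]
    _ = eVar[h; ν] / n := by
        rw [← ofReal_variance (memLp_empMean hh), variance_empMean hh,
          ENNReal.ofReal_div_of_pos (by positivity), ofReal_variance hh, ENNReal.ofReal_natCast]
    _ ≤ (∫⁻ y, ‖h y‖ₑ ^ 2 ∂ν) / n := by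
        gcongr
        exact evariance_le_lintegral_enorm_sq hh

lemma le_add_sq_div (a c : ℝ≥0∞) : a ≤ c + a ^ 2 / c := by
  rcases le_or_gt a c with hac | hca
  · exact hac.trans le_self_add
  · have ha : a ^ 2 ≠ 0 := pow_ne_zero 2 (ne_bot_of_gt hca)
    refine le_add_left ((ENNReal.le_div_iff_mul_le (.inr ha) (.inl hca.ne_top)).2 ?_)
    rw [sq]
    gcongr

lemma lintegral_enorm_empMean_sub_le_add {h : α → ℝ} (hh : MemLp h 2 ν) (hn : n ≠ 0) {c : ℝ≥0∞}
    (hc : c ≠ 0) :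
    ∫⁻ x, ‖empMean h x - ∫ y, h y ∂ν‖ₑ ∂Measure.pi (fun _ : Fin n => ν)
      ≤ c + (∫⁻ y, ‖h y‖ₑ ^ 2 ∂ν) / n / c := by
  calc ∫⁻ x, ‖empMean h x - ∫ y, h y ∂ν‖ₑ ∂Measure.pi (fun _ : Fin n => ν)
      ≤ ∫⁻ x, (c + ‖empMean h x - ∫ y, h y ∂ν‖ₑ ^ 2 * c⁻¹) ∂Measure.pi (fun _ : Fin n => ν) := by
        gcongr with x
        exact le_add_sq_div _ c
    _ ≤ c + (∫⁻ y, ‖h y‖ₑ ^ 2 ∂ν) / n / c := by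
        rw [lintegral_add_left measurable_const, lintegral_const, measure_univ, mul_one,
          lintegral_mul_const' _ _ (ENNReal.inv_ne_top.2 hc), ← div_eq_mul_inv]
        gcongr
        exact lintegral_enorm_empMean_sub_sq_le hh hn

end EmpiricalMean

section Moments

/-- The moment `E[𝒟ᵖ]` of a law `ν` on `ℕ`, valued in `ℝ≥0∞` so that it may be infinite. -/
noncomputable def moment (ν : Measure ℕ) (p : ℝ) : ℝ≥0∞ := ∫⁻ x : ℕ, (x : ℝ≥0∞) ^ p ∂ν

variable {ν : Measure ℕ}

lemma moment_two (ν : Measure ℕ) : moment ν 2 = ∫⁻ x : ℕ, (x : ℝ≥0∞) ^ 2 ∂ν := by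
  simp_rw [moment, ENNReal.rpow_two]

lemma moment_mono {p q : ℝ} (hp : 0 < p) (hpq : p ≤ q) : moment ν p ≤ moment ν q := by
  refine lintegral_mono fun x => ?_
  rcases Nat.eq_zero_or_pos x with rfl | hx
  · simp [ENNReal.zero_rpow_of_pos hp]
  · exact ENNReal.rpow_le_rpow_of_exponent_le (by exact_mod_cast hx) hpq

lemma moment_ne_top_of_summable [IsFiniteMeasure ν] {p : ℝ} (hp : 0 ≤ p)
    (hsum : Summable fun k : ℕ => (k : ℝ) ^ p * ν.real {k}) : moment ν p ≠ ∞ := by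
  have hterm : ∀ k : ℕ, (k : ℝ≥0∞) ^ p * ν {k} = ENNReal.ofReal ((k : ℝ) ^ p * ν.real {k}) := by
    intro k
    rw [ENNReal.ofReal_mul (by positivity), ← ENNReal.ofReal_rpow_of_nonneg k.cast_nonneg hp,
      ENNReal.ofReal_natCast, ofReal_measureReal]
  rw [moment, lintegral_countable']
  simp_rw [hterm]
  exact hsum.tsum_ofReal_ne_top

lemma memLp_two_natCast (hν : moment ν 2 ≠ ∞) : MemLp (Nat.cast : ℕ → ℝ) 2 ν := by
  refine ⟨Measurable.of_discrete.aestronglyMeasurable, ?_⟩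
  rw [eLpNorm_lt_top_iff_lintegral_rpow_enorm_lt_top two_ne_zero ENNReal.ofNat_ne_top]
  simpa only [Real.enorm_natCast, ENNReal.toReal_ofNat, moment] using hν.lt_top

end Moments

section Tail

variable {ν : Measure ℕ} {g : ℕ → ℝ}

lemma tsum_indicator_Ioi_add (φ : ℕ → ℝ≥0∞) (K x : ℕ) :
    ∑' k, (Set.Ioi (k + K)).indicator φ x = (x - K : ℕ) * φ x := by
  rw [tsum_eq_sum (s := Finset.range (x - K))]
  · rw [Finset.sum_congr rfl fun k hk => Set.indicator_of_mem
      (show x ∈ Set.Ioi (k + K) by grind) φ, Finset.sum_const, Finset.card_range, nsmul_eq_mul]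
  · intro k hk
    exact Set.indicator_of_notMem (by grind) φ

lemma sum_range_indicator_Ioi (φ : ℕ → ℝ≥0∞) (K x : ℕ) :
    ∑ k ∈ Finset.range K, (Set.Ioi k).indicator φ x = (min x K : ℕ) * φ x := by
  have hfilter : (Finset.range K).filter (x ∈ Set.Ioi ·) = Finset.range (min x K) := by
    ext k
    simp [and_comm]
  simp_rw [Set.indicator_apply]
  rw [← Finset.sum_filter, hfilter, Finset.sum_const, Finset.card_range, nsmul_eq_mul]

lemma tsum_enorm_indicator_Ioi (g : ℕ → ℝ) (x : ℕ) :
    ∑' k, ‖(Set.Ioi k).indicator g x‖ₑ = x * ‖g x‖ₑ := by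
  simpa only [enorm_indicator_eq_indicator_enorm, add_zero, Nat.sub_zero] using
    tsum_indicator_Ioi_add (‖g ·‖ₑ) 0 x

lemma natCast_mul_enorm_le_sq (hg : ∀ x ≠ 0, ‖g x‖ₑ ≤ x) (x : ℕ) :
    x * ‖g x‖ₑ ≤ (x : ℝ≥0∞) ^ 2 := by
  rcases eq_or_ne x 0 with rfl | hx
  · simp
  · rw [sq]
    gcongr
    exact hg x hx

lemma memLp_indicator_Ioi (hg : ∀ x ≠ 0, ‖g x‖ₑ ≤ x) (hν : moment ν 2 ≠ ∞) (k : ℕ) :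
    MemLp ((Set.Ioi k).indicator g) 2 ν := by
  refine (memLp_two_natCast hν).mono Measurable.of_discrete.aestronglyMeasurable
    (ae_of_all _ fun x => enorm_le_iff_norm_le.1 ?_)
  rw [Real.enorm_natCast, enorm_indicator_eq_indicator_enorm]
  exact Set.indicator_apply_le fun hx => hg x (by grind)

lemma tsum_lintegral_indicator_Ioi_add_le (hg : ∀ x ≠ 0, ‖g x‖ₑ ≤ x) {η : ℝ} (hη : 0 ≤ η) {K : ℕ}
    (hK : K ≠ 0) :
    ∑' k, ∫⁻ x, ‖(Set.Ioi (k + K)).indicator g x‖ₑ ∂ν ≤ (K : ℝ≥0∞) ^ (-η) * moment ν (2 + η) := by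
  rw [← lintegral_tsum fun k => Measurable.of_discrete.aemeasurable, moment,
    ← lintegral_const_mul _ Measurable.of_discrete]
  refine lintegral_mono fun x => ?_
  simp_rw [enorm_indicator_eq_indicator_enorm]
  rw [tsum_indicator_Ioi_add]
  rcases le_or_gt x K with hxK | hKx
  · simp [Nat.sub_eq_zero_of_le hxK]
  have hx : x ≠ 0 := by lia
  calc ((x - K : ℕ) : ℝ≥0∞) * ‖g x‖ₑ ≤ x * x := by
        gcongr
        · lia
        · exact hg x hx
    _ = (x : ℝ≥0∞) ^ (-η) * (x : ℝ≥0∞) ^ (2 + η) := by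
        rw [← ENNReal.rpow_add _ _ (by simpa using hx) (by simp), show -η + (2 + η) = 2 by ring,
          ENNReal.rpow_two, sq]
    _ ≤ (K : ℝ≥0∞) ^ (-η) * (x : ℝ≥0∞) ^ (2 + η) := by
        rw [ENNReal.rpow_neg, ENNReal.rpow_neg]
        gcongr

lemma sum_range_lintegral_indicator_Ioi_sq_le (hg : ∀ x ≠ 0, ‖g x‖ₑ ≤ x) {η : ℝ} (hη₀ : 0 ≤ η)
    (hη₁ : η ≤ 1) (K : ℕ) :
    ∑ k ∈ Finset.range K, ∫⁻ x, ‖(Set.Ioi k).indicator g x‖ₑ ^ 2 ∂ν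
      ≤ (K : ℝ≥0∞) ^ (1 - η) * moment ν (2 + η) := by
  rw [← lintegral_finsetSum _ fun k _ => Measurable.of_discrete, moment,
    ← lintegral_const_mul _ Measurable.of_discrete]
  refine lintegral_mono fun x => ?_
  have hmin : ((min x K : ℕ) : ℝ≥0∞) ≤ (K : ℝ≥0∞) ^ (1 - η) * (x : ℝ≥0∞) ^ η := by
    calc ((min x K : ℕ) : ℝ≥0∞)
        = ((min x K : ℕ) : ℝ≥0∞) ^ (1 - η) * ((min x K : ℕ) : ℝ≥0∞) ^ η := by
          rw [← ENNReal.rpow_add_of_nonneg _ _ (sub_nonneg.2 hη₁) hη₀, sub_add_cancel,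
            ENNReal.rpow_one]
      _ ≤ (K : ℝ≥0∞) ^ (1 - η) * (x : ℝ≥0∞) ^ η := by
          gcongr <;> simp
  calc ∑ k ∈ Finset.range K, ‖(Set.Ioi k).indicator g x‖ₑ ^ 2
      = (min x K : ℕ) * ‖g x‖ₑ ^ 2 := by
        rw [← sum_range_indicator_Ioi (‖g ·‖ₑ ^ 2)]
        refine Finset.sum_congr rfl fun k _ => ?_
        by_cases hx : x ∈ Set.Ioi k <;> simp [hx]
    _ ≤ (min x K : ℕ) * (x : ℝ≥0∞) ^ 2 := by
        rcases eq_or_ne x 0 with rfl | hx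
        · simp
        · gcongr
          exact hg x hx
    _ ≤ (K : ℝ≥0∞) ^ (1 - η) * (x : ℝ≥0∞) ^ η * (x : ℝ≥0∞) ^ 2 := by
        gcongr
    _ = (K : ℝ≥0∞) ^ (1 - η) * (x : ℝ≥0∞) ^ (2 + η) := by
        rw [mul_assoc, mul_comm ((x : ℝ≥0∞) ^ η), ENNReal.rpow_add_of_nonneg _ _ two_pos.le hη₀,
          ENNReal.rpow_two]

end Tail

section TailDist

variable {ν : Measure ℕ} {n : ℕ} {g : ℕ → ℝ}

/-- The weighted tail distance `∑ₖ |(1/n) ∑ᵢ g(dᵢ) 1{dᵢ > k} - E[g(𝒟) 1{𝒟 > k}]|` between a sample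
`d` and the law `ν` of `𝒟`. The weight `g = 1` gives `d₁(fₙ, f)`, and the weight `g(x) = x`
controls `d₁(fₙ*, f*)`. -/
noncomputable def tailDist (g : ℕ → ℝ) (ν : Measure ℕ) (d : Fin n → ℕ) : ℝ≥0∞ :=
  ∑' k, ‖empMean ((Set.Ioi k).indicator g) d - ∫ y, (Set.Ioi k).indicator g y ∂ν‖ₑ

lemma tailDist_update_le (g : ℕ → ℝ) (ν : Measure ℕ) (d : Fin n → ℕ) (i : Fin n) (y : ℕ) :
    tailDist g ν (Function.update d i y)
      ≤ tailDist g ν d + (y * ‖g y‖ₑ + d i * ‖g (d i)‖ₑ) / n := by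
  have hn : (n : ℝ) ≠ 0 := by exact_mod_cast (Fin.pos i).ne'
  rw [← tsum_enorm_indicator_Ioi, ← tsum_enorm_indicator_Ioi, ← ENNReal.tsum_add, div_eq_mul_inv,
    ← ENNReal.tsum_mul_right, tailDist, tailDist, ← ENNReal.tsum_add]
  refine ENNReal.tsum_le_tsum fun k => ?_
  rw [empMean_update, add_sub_right_comm]
  refine (enorm_add_le _ _).trans ?_
  gcongr
  rw [div_eq_mul_inv, enorm_mul, enorm_inv hn, Real.enorm_natCast]
  gcongr
  exact enorm_sub_le

variable [IsProbabilityMeasure ν]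

lemma sum_range_lintegral_enorm_empMean_sub_le (hg : ∀ x ≠ 0, ‖g x‖ₑ ≤ x) {η : ℝ} (hη₀ : 0 ≤ η)
    (hη₁ : η ≤ 1) (hν : moment ν (2 + η) ≠ ∞) (hn : n ≠ 0) {K : ℕ} (hK : K ≠ 0) :
    ∑ k ∈ Finset.range K, ∫⁻ d, ‖empMean ((Set.Ioi k).indicator g) d
        - ∫ y, (Set.Ioi k).indicator g y ∂ν‖ₑ ∂Measure.pi (fun _ : Fin n => ν)
      ≤ (K : ℝ≥0∞) ^ (-η) + (K : ℝ≥0∞) ^ 2 * moment ν (2 + η) / n := by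
  have hK₀ : (K : ℝ≥0∞) ≠ 0 := by exact_mod_cast hK
  have hK_top : (K : ℝ≥0∞) ≠ ∞ := ENNReal.natCast_ne_top K
  have hν₂ : moment ν 2 ≠ ∞ := ne_top_of_le_ne_top hν (moment_mono two_pos (by linarith))
  -- This choice of `c` makes the `K` constant terms add up to the size of the tail beyond `K`.
  set c : ℝ≥0∞ := (K : ℝ≥0∞) ^ (-(1 + η)) with hc
  have hc₀ : c ≠ 0 := by simp [hc, hK₀, hK_top]
  calc _ ≤ ∑ k ∈ Finset.range K, (c + (∫⁻ x, ‖(Set.Ioi k).indicator g x‖ₑ ^ 2 ∂ν) / n / c) :=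
        Finset.sum_le_sum fun k _ =>
          lintegral_enorm_empMean_sub_le_add (memLp_indicator_Ioi hg hν₂ k) hn hc₀
    _ = K * c + (∑ k ∈ Finset.range K, ∫⁻ x, ‖(Set.Ioi k).indicator g x‖ₑ ^ 2 ∂ν) / n / c := by
        simp_rw [div_eq_mul_inv]
        rw [Finset.sum_add_distrib, Finset.sum_const, Finset.card_range, nsmul_eq_mul,
          Finset.sum_mul, Finset.sum_mul]
    _ ≤ K * c + (K : ℝ≥0∞) ^ (1 - η) * moment ν (2 + η) / n / c := by
        gcongr
        exact sum_range_lintegral_indicator_Ioi_sq_le hg hη₀ hη₁ K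
    _ = (K : ℝ≥0∞) ^ (-η) + (K : ℝ≥0∞) ^ 2 * moment ν (2 + η) / n := by
        have hKc : K * c = (K : ℝ≥0∞) ^ (-η) := by
          nth_rw 1 [← ENNReal.rpow_one (K : ℝ≥0∞)]
          rw [hc, ← ENNReal.rpow_add _ _ hK₀ hK_top, show 1 + -(1 + η) = -η by ring]
        have hKc' : (K : ℝ≥0∞) ^ (1 - η) / c = (K : ℝ≥0∞) ^ 2 := by
          rw [hc, div_eq_mul_inv, ← ENNReal.rpow_neg, ← ENNReal.rpow_add _ _ hK₀ hK_top,
            show 1 - η + - -(1 + η) = 2 by ring, ENNReal.rpow_two]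
        rw [hKc, ← hKc']
        simp_rw [div_eq_mul_inv]
        ring

lemma lintegral_tailDist_le (hg : ∀ x ≠ 0, ‖g x‖ₑ ≤ x) {η : ℝ} (hη₀ : 0 ≤ η)
    (hη₁ : η ≤ 1) (hν : moment ν (2 + η) ≠ ∞) (hn : n ≠ 0) {K : ℕ} (hK : K ≠ 0) :
    ∫⁻ d, tailDist g ν d ∂Measure.pi (fun _ : Fin n => ν)
      ≤ (1 + 2 * moment ν (2 + η)) * (K : ℝ≥0∞) ^ (-η)
        + (K : ℝ≥0∞) ^ 2 * moment ν (2 + η) / n := by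
  have htail : ∑' k, ∫⁻ d, ‖empMean ((Set.Ioi (k + K)).indicator g) d
        - ∫ y, (Set.Ioi (k + K)).indicator g y ∂ν‖ₑ ∂Measure.pi (fun _ : Fin n => ν)
      ≤ 2 * ((K : ℝ≥0∞) ^ (-η) * moment ν (2 + η)) := by
    calc _ ≤ ∑' k, 2 * ∫⁻ x, ‖(Set.Ioi (k + K)).indicator g x‖ₑ ∂ν :=
          ENNReal.tsum_le_tsum fun k => lintegral_enorm_empMean_sub_le Measurable.of_discrete
      _ ≤ 2 * ((K : ℝ≥0∞) ^ (-η) * moment ν (2 + η)) := by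
          rw [ENNReal.tsum_mul_left]
          gcongr
          exact tsum_lintegral_indicator_Ioi_add_le hg hη₀ hK
  simp_rw [tailDist]
  rw [lintegral_tsum fun k => Measurable.of_discrete.aemeasurable,
    ← ENNReal.summable.sum_add_tsum_nat_add' (k := K)]
  refine (add_le_add (sum_range_lintegral_enorm_empMean_sub_le hg hη₀ hη₁ hν hn hK) htail).trans_eq
    ?_
  ring

lemma exists_natCast_rpow_neg_le_and_sq_div_le {η : ℝ} (hη : 0 ≤ η) (hn : n ≠ 0) :
    ∃ K : ℕ, K ≠ 0 ∧ (K : ℝ≥0∞) ^ (-η) ≤ (n : ℝ≥0∞) ^ (-(η / (2 + η))) ∧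
      (K : ℝ≥0∞) ^ 2 / n ≤ 4 * (n : ℝ≥0∞) ^ (-(η / (2 + η))) := by
  have hn₀ : (n : ℝ≥0∞) ≠ 0 := by exact_mod_cast hn
  have hn_top : (n : ℝ≥0∞) ≠ ∞ := ENNReal.natCast_ne_top n
  set r : ℝ≥0 := (n : ℝ≥0) ^ (1 / (2 + η)) with hr
  have hr₁ : 1 ≤ r := NNReal.one_le_rpow (by exact_mod_cast Nat.one_le_iff_ne_zero.2 hn)
    (by positivity)
  have hr_coe : (r : ℝ≥0∞) = (n : ℝ≥0∞) ^ (1 / (2 + η)) := by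
    rw [hr, ENNReal.coe_rpow_of_nonneg _ (by positivity), ENNReal.coe_natCast]
  have hrK : (r : ℝ≥0∞) ≤ (⌈r⌉₊ : ℕ) := by exact_mod_cast Nat.le_ceil r
  have hKr : ((⌈r⌉₊ : ℕ) : ℝ≥0∞) ≤ 2 * r := by
    have : (⌈r⌉₊ : ℝ≥0) ≤ 2 * r :=
      (Nat.ceil_lt_add_one zero_le).le.trans (by rw [two_mul]; gcongr)
    exact_mod_cast this
  refine ⟨⌈r⌉₊, (Nat.ceil_pos.2 (one_pos.trans_le hr₁)).ne', ?_, ?_⟩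
  · calc ((⌈r⌉₊ : ℕ) : ℝ≥0∞) ^ (-η) ≤ (r : ℝ≥0∞) ^ (-η) := by
          rw [ENNReal.rpow_neg, ENNReal.rpow_neg]
          gcongr
      _ = (n : ℝ≥0∞) ^ (-(η / (2 + η))) := by
          rw [hr_coe, ← ENNReal.rpow_mul]
          ring_nf
  · calc ((⌈r⌉₊ : ℕ) : ℝ≥0∞) ^ 2 / n ≤ (2 * r) ^ 2 / n := by gcongr
      _ = 4 * ((n : ℝ≥0∞) ^ (2 / (2 + η)) * (n : ℝ≥0∞) ^ (-1 : ℝ)) := by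
          rw [mul_pow, hr_coe, ← ENNReal.rpow_two ((n : ℝ≥0∞) ^ _), ← ENNReal.rpow_mul,
            ENNReal.rpow_neg_one, div_eq_mul_inv, mul_assoc, one_div_mul_eq_div,
            show (2 : ℝ≥0∞) ^ 2 = 4 by norm_num]
      _ = 4 * (n : ℝ≥0∞) ^ (-(η / (2 + η))) := by
          rw [← ENNReal.rpow_add _ _ hn₀ hn_top,
            show 2 / (2 + η) + -1 = -(η / (2 + η)) by field_simp; ring]

lemma lintegral_tailDist_le_rpow (hg : ∀ x ≠ 0, ‖g x‖ₑ ≤ x) {η : ℝ} (hη₀ : 0 ≤ η)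
    (hη₁ : η ≤ 1) (hν : moment ν (2 + η) ≠ ∞) (hn : n ≠ 0) :
    ∫⁻ d, tailDist g ν d ∂Measure.pi (fun _ : Fin n => ν)
      ≤ (1 + 6 * moment ν (2 + η)) * (n : ℝ≥0∞) ^ (-(η / (2 + η))) := by
  obtain ⟨K, hK, hK_tail, hK_sq⟩ := exists_natCast_rpow_neg_le_and_sq_div_le hη₀ hn
  calc ∫⁻ d, tailDist g ν d ∂Measure.pi (fun _ : Fin n => ν)
      ≤ (1 + 2 * moment ν (2 + η)) * (K : ℝ≥0∞) ^ (-η)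
        + (K : ℝ≥0∞) ^ 2 * moment ν (2 + η) / n := lintegral_tailDist_le hg hη₀ hη₁ hν hn hK
    _ = (1 + 2 * moment ν (2 + η)) * (K : ℝ≥0∞) ^ (-η)
        + moment ν (2 + η) * ((K : ℝ≥0∞) ^ 2 / n) := by
      rw [mul_comm ((K : ℝ≥0∞) ^ 2), mul_div_assoc]
    _ ≤ (1 + 2 * moment ν (2 + η)) * (n : ℝ≥0∞) ^ (-(η / (2 + η)))
        + moment ν (2 + η) * (4 * (n : ℝ≥0∞) ^ (-(η / (2 + η)))) := by gcongr
    _ = (1 + 6 * moment ν (2 + η)) * (n : ℝ≥0∞) ^ (-(η / (2 + η))) := by ring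

end TailDist

section Parity

variable {ν : Measure ℕ} {n : ℕ} {g : ℕ → ℝ}

lemma parityFix_eq_update (hn : n ≠ 0) (x : Fin n → ℕ) :
    parityFix n x = Function.update x ⟨n - 1, by lia⟩ (x ⟨n - 1, by lia⟩ + (∑ j, x j) % 2) := by
  ext i
  by_cases hi : i = ⟨n - 1, by lia⟩
  · subst hi
    rw [parityFix, Function.update_self]
    grind
  · rw [parityFix, Function.update_of_ne hi, if_neg fun h => hi (Fin.ext h.1)]

lemma tailDist_parityFix_le (hg : ∀ x ≠ 0, ‖g x‖ₑ ≤ x) (hn : n ≠ 0) (x : Fin n → ℕ) :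
    tailDist g ν (parityFix n x)
      ≤ tailDist g ν x + 4 * ((x ⟨n - 1, by lia⟩ : ℝ≥0∞) ^ 2 + 1) / n := by
  rw [parityFix_eq_update hn]
  set i : Fin n := ⟨n - 1, by lia⟩
  set y := x i + (∑ j, x j) % 2
  have hy : y ≤ x i + 1 := by lia
  have hsq : y ^ 2 + x i ^ 2 ≤ 4 * (x i ^ 2 + 1) := by nlinarith [two_mul_le_add_sq (x i) 1]
  refine (tailDist_update_le g ν x i y).trans ?_
  gcongr
  calc (y : ℝ≥0∞) * ‖g y‖ₑ + x i * ‖g (x i)‖ₑ ≤ (y : ℝ≥0∞) ^ 2 + (x i : ℝ≥0∞) ^ 2 :=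
        add_le_add (natCast_mul_enorm_le_sq hg y) (natCast_mul_enorm_le_sq hg (x i))
    _ ≤ 4 * ((x i : ℝ≥0∞) ^ 2 + 1) := by exact_mod_cast hsq

variable [IsProbabilityMeasure ν]

lemma lintegral_tailDist_iidLaw_le (hg : ∀ x ≠ 0, ‖g x‖ₑ ≤ x) {η : ℝ} (hη₀ : 0 ≤ η)
    (hη₁ : η ≤ 1) (hν : moment ν (2 + η) ≠ ∞) (hn : n ≠ 0) :
    ∫⁻ d, tailDist g ν d ∂iidLaw n ν
      ≤ 5 * (1 + 2 * moment ν (2 + η)) * (n : ℝ≥0∞) ^ (-(η / (2 + η))) := by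
  have hn_inv : (n : ℝ≥0∞)⁻¹ ≤ (n : ℝ≥0∞) ^ (-(η / (2 + η))) := by
    rw [← ENNReal.rpow_neg_one]
    refine ENNReal.rpow_le_rpow_of_exponent_le (by exact_mod_cast Nat.one_le_iff_ne_zero.2 hn) ?_
    exact neg_le_neg (div_le_one_of_le₀ (by linarith) (by linarith))
  have hcorr : ∫⁻ x : Fin n → ℕ, 4 * ((x ⟨n - 1, by lia⟩ : ℝ≥0∞) ^ 2 + 1) / n
      ∂Measure.pi (fun _ : Fin n => ν) = 4 * (moment ν 2 + 1) / n := by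
    rw [lintegral_comp_eval_pi (φ := fun y : ℕ => 4 * ((y : ℝ≥0∞) ^ 2 + 1) / n)
      Measurable.of_discrete, moment_two]
    simp_rw [div_eq_mul_inv]
    rw [lintegral_mul_const _ Measurable.of_discrete, lintegral_const_mul _ Measurable.of_discrete,
      lintegral_add_right _ measurable_const, lintegral_const, measure_univ, mul_one]
  calc ∫⁻ d, tailDist g ν d ∂iidLaw n ν
      = ∫⁻ x, tailDist g ν (parityFix n x) ∂Measure.pi (fun _ : Fin n => ν) :=
        lintegral_map Measurable.of_discrete Measurable.of_discrete
    _ ≤ ∫⁻ x, tailDist g ν x ∂Measure.pi (fun _ : Fin n => ν) + 4 * (moment ν 2 + 1) / n := by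
        rw [← hcorr, ← lintegral_add_left Measurable.of_discrete]
        exact lintegral_mono fun x => tailDist_parityFix_le hg hn x
    _ ≤ (1 + 6 * moment ν (2 + η)) * (n : ℝ≥0∞) ^ (-(η / (2 + η)))
          + 4 * (moment ν (2 + η) + 1) * (n : ℝ≥0∞) ^ (-(η / (2 + η))) := by
        rw [div_eq_mul_inv]
        gcongr
        · exact lintegral_tailDist_le_rpow hg hη₀ hη₁ hν hn
        · exact moment_mono two_pos (by linarith)
    _ = 5 * (1 + 2 * moment ν (2 + η)) * (n : ℝ≥0∞) ^ (-(η / (2 + η))) := by ring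

lemma ae_iidLaw_ne_zero (hν₀ : ν {0} = 0) : ∀ᵐ d ∂iidLaw n ν, ∀ i, d i ≠ 0 := by
  have hν_ae : ∀ᵐ y ∂ν, y ≠ 0 := by
    rw [ae_iff]
    simpa using hν₀
  rw [iidLaw, ae_map_iff Measurable.of_discrete.aemeasurable .of_discrete]
  have hpi : ∀ᵐ x ∂Measure.pi (fun _ : Fin n => ν), ∀ i, x i ≠ 0 :=
    ae_all_iff.2 fun i => (measurePreserving_eval (fun _ : Fin n => ν) i).quasiMeasurePreserving.ae
      hν_ae
  filter_upwards [hpi] with x hx i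
  unfold parityFix
  grind

end Parity

section Distances

variable {ν : Measure ℕ} {n : ℕ}

/-- The density of a law `ν` on `ℕ`. -/
noncomputable def massFn (ν : Measure ℕ) (k : ℕ) : ℝ := ν.real {k}

lemma sum_range_sum_ite_eq (h : ℕ → ℝ) (d : Fin n → ℕ) (k : ℕ) :
    ∑ j ∈ Finset.range (k + 1), ∑ i, (if d i = j then h j else 0)
      = ∑ i, h (d i) - ∑ i, (Set.Ioi k).indicator h (d i) := by
  rw [Finset.sum_comm, ← Finset.sum_sub_distrib]
  refine Finset.sum_congr rfl fun i _ => ?_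
  rw [Finset.sum_ite_eq, Set.indicator_apply]
  grind

lemma sum_range_mul_massFn [IsFiniteMeasure ν] {h : ℕ → ℝ} (hh : Integrable h ν) (k : ℕ) :
    ∑ j ∈ Finset.range (k + 1), h j * massFn ν j
      = ∫ y, h y ∂ν - ∫ y, (Set.Ioi k).indicator h y ∂ν := by
  have hcompl : (Set.Ioi k)ᶜ = (Finset.range (k + 1) : Set ℕ) := by
    ext j
    simp
  rw [integral_indicator .of_discrete, ← setIntegral_compl .of_discrete hh, hcompl,
    setIntegral_finset _ hh.integrableOn]
  simp_rw [massFn, smul_eq_mul, mul_comm]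

lemma meanPMF_massFn (hν : Integrable (Nat.cast : ℕ → ℝ) ν) :
    meanPMF (massFn ν) = ∫ x : ℕ, (x : ℝ) ∂ν := by
  rw [integral_countable hν]
  simp_rw [meanPMF, massFn, smul_eq_mul, mul_comm]

lemma cdfOf_empDens (hn : n ≠ 0) (d : Fin n → ℕ) (k : ℕ) :
    cdfOf (empDens d) k = 1 - empMean ((Set.Ioi k).indicator fun _ => 1) d := by
  have hsum := sum_range_sum_ite_eq (fun _ => 1) d k
  rw [Finset.sum_const, Finset.card_fin, nsmul_one] at hsum
  simp_rw [cdfOf, empDens]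
  rw [← Finset.sum_div, hsum, sub_div, div_self (by exact_mod_cast hn), empMean]

lemma cdfOf_massFn [IsProbabilityMeasure ν] (k : ℕ) :
    cdfOf (massFn ν) k = 1 - ∫ y, (Set.Ioi k).indicator (fun _ => (1 : ℝ)) y ∂ν := by
  simpa [cdfOf] using sum_range_mul_massFn (ν := ν) (integrable_const (1 : ℝ)) k

lemma d1_empDens [IsProbabilityMeasure ν] (hn : n ≠ 0) (d : Fin n → ℕ) :
    d1 (empDens d) (massFn ν) = tailDist (fun _ => 1) ν d := by
  simp_rw [d1, tailDist, cdfOf_empDens hn, cdfOf_massFn, sub_sub_sub_cancel_left,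
    ← Real.enorm_eq_ofReal_abs]
  exact tsum_congr fun k => enorm_sub_rev _ _

lemma one_le_empMean_natCast {d : Fin n → ℕ} (hn : n ≠ 0) (hd : ∀ i, d i ≠ 0) :
    1 ≤ empMean Nat.cast d := by
  rw [empMean, one_le_div (by positivity)]
  simpa using Finset.card_nsmul_le_sum Finset.univ (fun i => (d i : ℝ)) 1
    fun i _ => by exact_mod_cast Nat.one_le_iff_ne_zero.2 (hd i)

lemma one_le_integral_natCast [IsProbabilityMeasure ν] (hν₀ : ν {0} = 0)
    (hν : Integrable (Nat.cast : ℕ → ℝ) ν) : 1 ≤ ∫ x : ℕ, (x : ℝ) ∂ν := by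
  have hν_ae : ∀ᵐ x : ℕ ∂ν, (1 : ℝ) ≤ x := by
    rw [ae_iff]
    simpa using hν₀
  simpa using integral_mono_ae (integrable_const (1 : ℝ)) hν hν_ae

lemma cdfOf_empSB {d : Fin n → ℕ} (hn : n ≠ 0) (hd : ∀ i, d i ≠ 0) (k : ℕ) :
    cdfOf (empSB d) k
      = 1 - empMean ((Set.Ioi k).indicator Nat.cast) d / empMean Nat.cast d := by
  have hmean := (one_pos.trans_le (one_le_empMean_natCast hn hd)).ne'
  have hn₀ : (n : ℝ) ≠ 0 := by exact_mod_cast hn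
  rw [one_sub_div hmean, empMean, empMean, ← sub_div, div_div_div_cancel_right₀ hn₀,
    ← sum_range_sum_ite_eq]
  simp_rw [cdfOf, empSB, degSum]
  rw [← Finset.sum_div, Nat.cast_sum]

lemma cdfOf_sizeBiased [IsProbabilityMeasure ν] (hν₀ : ν {0} = 0)
    (hν : Integrable (Nat.cast : ℕ → ℝ) ν) (k : ℕ) :
    cdfOf (sizeBiased (massFn ν)) k
      = 1 - (∫ y, (Set.Ioi k).indicator (Nat.cast : ℕ → ℝ) y ∂ν) / ∫ x : ℕ, (x : ℝ) ∂ν := by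
  have hmean := (one_pos.trans_le (one_le_integral_natCast hν₀ hν)).ne'
  rw [one_sub_div hmean, ← sum_range_mul_massFn hν]
  simp_rw [cdfOf, sizeBiased, meanPMF_massFn hν]
  rw [← Finset.sum_div]

lemma enorm_div_sub_div_le {a b a' b' : ℝ} (hb : 1 ≤ b) (hb' : 1 ≤ b') :
    ‖a / b - a' / b'‖ₑ ≤ ‖a - a'‖ₑ + ‖a'‖ₑ * ‖b - b'‖ₑ := by
  have hb₀ : 0 < b := by linarith
  have hb₀' : 0 < b' := by linarith
  have hinv : ‖b⁻¹‖ₑ ≤ 1 := by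
    rw [← enorm_one (G := ℝ), enorm_le_iff_norm_le]
    simpa [abs_of_pos hb₀] using inv_le_one_of_one_le₀ hb
  have hinv' : ‖b'⁻¹‖ₑ ≤ 1 := by
    rw [← enorm_one (G := ℝ), enorm_le_iff_norm_le]
    simpa [abs_of_pos hb₀'] using inv_le_one_of_one_le₀ hb'
  have hsplit : a / b - a' / b' = (a - a') * b⁻¹ - a' * (b - b') * b⁻¹ * b'⁻¹ := by
    field_simp
    ring
  calc ‖a / b - a' / b'‖ₑ
      ≤ ‖a - a'‖ₑ * ‖b⁻¹‖ₑ + ‖a'‖ₑ * ‖b - b'‖ₑ * ‖b⁻¹‖ₑ * ‖b'⁻¹‖ₑ := by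
        rw [hsplit]
        simpa only [enorm_mul] using
          enorm_sub_le (a := (a - a') * b⁻¹) (b := a' * (b - b') * b⁻¹ * b'⁻¹)
    _ ≤ ‖a - a'‖ₑ * 1 + ‖a'‖ₑ * ‖b - b'‖ₑ * 1 * 1 := by gcongr
    _ = ‖a - a'‖ₑ + ‖a'‖ₑ * ‖b - b'‖ₑ := by simp only [mul_one]

lemma enorm_empMean_natCast_sub_le_tailDist (ν : Measure ℕ) (d : Fin n → ℕ) :
    ‖empMean Nat.cast d - ∫ x : ℕ, (x : ℝ) ∂ν‖ₑ ≤ tailDist Nat.cast ν d := by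
  have hzero : (Set.Ioi 0).indicator (Nat.cast : ℕ → ℝ) = Nat.cast :=
    Set.indicator_eq_self.2 fun x hx => Nat.pos_of_ne_zero fun h => hx (by simp [h])
  simpa only [hzero, tailDist] using ENNReal.le_tsum (f := fun k =>
    ‖empMean ((Set.Ioi k).indicator Nat.cast) d
      - ∫ y, (Set.Ioi k).indicator (Nat.cast : ℕ → ℝ) y ∂ν‖ₑ) 0

lemma tsum_enorm_integral_indicator_Ioi_natCast_le (ν : Measure ℕ) :
    ∑' k, ‖∫ y, (Set.Ioi k).indicator (Nat.cast : ℕ → ℝ) y ∂ν‖ₑ ≤ moment ν 2 := by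
  calc ∑' k, ‖∫ y, (Set.Ioi k).indicator (Nat.cast : ℕ → ℝ) y ∂ν‖ₑ
      ≤ ∑' k, ∫⁻ y, ‖(Set.Ioi k).indicator (Nat.cast : ℕ → ℝ) y‖ₑ ∂ν :=
        ENNReal.tsum_le_tsum fun k => enorm_integral_le_lintegral_enorm _
    _ = moment ν 2 := by
        rw [← lintegral_tsum fun k => Measurable.of_discrete.aemeasurable, moment_two]
        simp_rw [tsum_enorm_indicator_Ioi, Real.enorm_natCast, sq]

lemma d1_empSB_le [IsProbabilityMeasure ν] (hν₀ : ν {0} = 0) (hν : moment ν 2 ≠ ∞) (hn : n ≠ 0)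
    {d : Fin n → ℕ} (hd : ∀ i, d i ≠ 0) :
    d1 (empSB d) (sizeBiased (massFn ν)) ≤ (1 + moment ν 2) * tailDist Nat.cast ν d := by
  have hint : Integrable (Nat.cast : ℕ → ℝ) ν := (memLp_two_natCast hν).integrable one_le_two
  set T := tailDist Nat.cast ν d
  calc d1 (empSB d) (sizeBiased (massFn ν))
      = ∑' k, ‖empMean ((Set.Ioi k).indicator Nat.cast) d / empMean Nat.cast d
          - (∫ y, (Set.Ioi k).indicator (Nat.cast : ℕ → ℝ) y ∂ν) / ∫ x : ℕ, (x : ℝ) ∂ν‖ₑ := by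
        simp_rw [d1, cdfOf_empSB hn hd, cdfOf_sizeBiased hν₀ hint, sub_sub_sub_cancel_left,
          ← Real.enorm_eq_ofReal_abs]
        exact tsum_congr fun k => enorm_sub_rev _ _
    _ ≤ ∑' k, (‖empMean ((Set.Ioi k).indicator Nat.cast) d
          - ∫ y, (Set.Ioi k).indicator (Nat.cast : ℕ → ℝ) y ∂ν‖ₑ
          + ‖∫ y, (Set.Ioi k).indicator (Nat.cast : ℕ → ℝ) y ∂ν‖ₑ * T) :=
        ENNReal.tsum_le_tsum fun k => (enorm_div_sub_div_le (one_le_empMean_natCast hn hd)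
          (one_le_integral_natCast hν₀ hint)).trans
            (by gcongr; exact enorm_empMean_natCast_sub_le_tailDist ν d)
    _ ≤ T + moment ν 2 * T := by
        rw [ENNReal.tsum_add, ENNReal.tsum_mul_right]
        gcongr
        · rfl
        · exact tsum_enorm_integral_indicator_Ioi_natCast_le ν
    _ = (1 + moment ν 2) * T := by rw [add_mul, one_mul]

end Distances

lemma measure_rpow_neg_lt_le {α : Type*} [MeasurableSpace α] {μ : Measure α} {X : α → ℝ≥0∞}
    (hX : AEMeasurable X μ) {C t : ℝ≥0∞} (ht : 1 ≤ t) (ht_top : t ≠ ∞) {r ε : ℝ} (hε : 2 * ε ≤ r)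
    (hmean : ∫⁻ a, X a ∂μ ≤ C * t ^ (-r)) :
    μ {a | t ^ (-ε) < X a} ≤ C * t ^ (-ε) := by
  have ht₀ : t ≠ 0 := (one_pos.trans_le ht).ne'
  calc μ {a | t ^ (-ε) < X a}
      ≤ μ {a | t ^ (-ε) ≤ X a} := measure_mono (Set.ofPred_subset_ofPred.2 fun _ => le_of_lt)
    _ ≤ (∫⁻ a, X a ∂μ) / t ^ (-ε) :=
        meas_ge_le_lintegral_div hX (by simp [ht₀, ht_top]) (by simp [ht₀, ht_top])
    _ ≤ C * t ^ (-(2 * ε)) / t ^ (-ε) := by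
        gcongr ?_ / _
        exact hmean.trans (mul_le_mul' le_rfl
          (ENNReal.rpow_le_rpow_of_exponent_le ht (neg_le_neg hε)))
    _ = C * t ^ (-ε) := by
        rw [mul_div_assoc, ← ENNReal.rpow_sub _ _ ht₀ ht_top, show -(2 * ε) - -ε = -ε by ring]

lemma lintegral_max_d1_iidLaw_le {ν : Measure ℕ} [IsProbabilityMeasure ν] (hν₀ : ν {0} = 0)
    {η : ℝ} (hη₀ : 0 ≤ η) (hη₁ : η ≤ 1) {n : ℕ}
    (hν : moment ν (2 + η) ≠ ∞) (hn : n ≠ 0) :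
    ∫⁻ d, max (d1 (empDens d) (massFn ν)) (d1 (empSB d) (sizeBiased (massFn ν))) ∂iidLaw n ν
      ≤ (2 + moment ν 2) * (5 * (1 + 2 * moment ν (2 + η)))
        * (n : ℝ≥0∞) ^ (-(η / (2 + η))) := by
  have hν₂ : moment ν 2 ≠ ∞ := ne_top_of_le_ne_top hν (moment_mono two_pos (by linarith))
  have hone : ∀ x : ℕ, x ≠ 0 → ‖(1 : ℝ)‖ₑ ≤ x := fun x hx => by
    rw [enorm_one]
    exact_mod_cast Nat.one_le_iff_ne_zero.2 hx
  have hcast : ∀ x : ℕ, x ≠ 0 → ‖(x : ℝ)‖ₑ ≤ x := fun x _ => (Real.enorm_natCast x).le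
  calc ∫⁻ d, max (d1 (empDens d) (massFn ν)) (d1 (empSB d) (sizeBiased (massFn ν))) ∂iidLaw n ν
      ≤ ∫⁻ d, (tailDist (fun _ => 1) ν d + (1 + moment ν 2) * tailDist Nat.cast ν d)
          ∂iidLaw n ν := by
        refine lintegral_mono_ae ?_
        filter_upwards [ae_iidLaw_ne_zero hν₀] with d hd
        exact max_le ((d1_empDens hn d).trans_le le_self_add)
          ((d1_empSB_le hν₀ hν₂ hn hd).trans le_add_self)
    _ = ∫⁻ d, tailDist (fun _ => 1) ν d ∂iidLaw n ν
          + (1 + moment ν 2) * ∫⁻ d, tailDist Nat.cast ν d ∂iidLaw n ν := by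
        rw [lintegral_add_left .of_discrete, lintegral_const_mul _ .of_discrete]
    _ ≤ 5 * (1 + 2 * moment ν (2 + η)) * (n : ℝ≥0∞) ^ (-(η / (2 + η)))
          + (1 + moment ν 2)
            * (5 * (1 + 2 * moment ν (2 + η)) * (n : ℝ≥0∞) ^ (-(η / (2 + η)))) := by
        gcongr
        · exact lintegral_tailDist_iidLaw_le hone hη₀ hη₁ hν hn
        · exact lintegral_tailDist_iidLaw_le hcast hη₀ hη₁ hν hn
    _ = (2 + moment ν 2) * (5 * (1 + 2 * moment ν (2 + η)))
          * (n : ℝ≥0∞) ^ (-(η / (2 + η))) := by ring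

/-- If `E[𝒟^{2+η}] < ∞` for some `0 < η < 1` and the degree sequence is
`IID(𝒟)`, then for any `0 < ε ≤ η/(2(η+2))`,
`P(max{d₁(f_n, f), d₁(f_n^*, f^*)} > n^{-ε}) = O(n^{-ε})`. -/
theorem stmt3 (ν : Measure ℕ) [IsProbabilityMeasure ν] (f : ℕ → ℝ)
    (hf : ∀ k, f k = (ν {k}).toReal) (hzero : ν {0} = 0)
    (η : ℝ) (hη0 : 0 < η) (hη1 : η < 1)
    (hmom : Summable fun k : ℕ => (k : ℝ) ^ (2 + η) * f k)
    (ε : ℝ) (hε0 : 0 < ε) (hε : ε ≤ η / (2 * (η + 2))) :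
    (fun n : ℕ =>
        ((iidLaw n ν) {d : Fin n → ℕ |
            ENNReal.ofReal ((n : ℝ) ^ (-ε)) <
              max (d1 (empDens d) f) (d1 (empSB d) (sizeBiased f))}).toReal)
      =O[atTop] fun n : ℕ => (n : ℝ) ^ (-ε) := by
  obtain rfl : f = massFn ν := funext hf
  have hν : moment ν (2 + η) ≠ ∞ := moment_ne_top_of_summable (by linarith) hmom
  have hν₂ : moment ν 2 ≠ ∞ := ne_top_of_le_ne_top hν (moment_mono two_pos (by linarith))
  have hε_rate : 2 * ε ≤ η / (2 + η) := by
    rw [mul_comm 2 (η + 2), ← div_div, add_comm η] at hε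
    linarith
  set C : ℝ≥0∞ := (2 + moment ν 2) * (5 * (1 + 2 * moment ν (2 + η)))
  have hC : C ≠ ∞ := by finiteness
  refine Asymptotics.IsBigO.of_bound C.toReal ?_
  filter_upwards [eventually_ne_atTop 0] with n hn
  have hrate := measure_rpow_neg_lt_le .of_discrete
    (t := n) (by exact_mod_cast Nat.one_le_iff_ne_zero.2 hn) (ENNReal.natCast_ne_top n) hε_rate
    (lintegral_max_d1_iidLaw_le hzero hη0.le hη1.le hν hn)
  rw [Real.norm_of_nonneg ENNReal.toReal_nonneg, Real.norm_of_nonneg (by positivity),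
    ← ENNReal.ofReal_rpow_of_pos (by positivity), ENNReal.ofReal_natCast]
  refine (ENNReal.toReal_mono (by finiteness) hrate).trans_eq ?_
  rw [ENNReal.toReal_mul, ← ENNReal.toReal_rpow, ENNReal.toReal_natCast]

end ANNDPaper
end

section
/- Let {G_n}_{n≥1} be a sequence of random multigraphs, G_n on n nodes with degree sequence (D_1, …, D_n), satisfying: (i) there exist a probability mass function f on the nonnegative integers with size-biased version f^*(k) = k f(k)/(Σ_ℓ ℓ f(ℓ)) and constants α, ε > 0 such that P(max{d₁(f_n, f), d₁(f_n^*, f^*)} > n^{-ε}) = O(n^{-α}); (ii) there exist a joint probability mass function h(k, ℓ) on the positive integers and κ > 0 such that P(Σ_{k,ℓ≥1} |h_n(k,ℓ) − h(k,ℓ)| 1{f_n(k) > 0} > n^{-κ}) → 0 as n → ∞; (iii) Σ_k k^{2+η} f(k) < ∞ for some 0 < η < 1. Define Φ(k) = 1{f^*(k) > 0} (Σ_{ℓ≥1} h(k,ℓ) ℓ)/f^*(k). Then for each fixed k with f(k) > 0 and each 0 < δ < min{ε, κη/(η+1)}, lim_{n→∞} P(|Φ_n(k) − Φ(k)| ≤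 n^{-δ}) = 1. -/
open MeasureTheory Filter
open scoped ENNReal NNReal BigOperators

namespace ANNDPaper

/-!
On the event that `d₁(f_n^*, f^*) ≤ n^{-ε}` and that the `k`-th rows of `h_n` and `h` differ by at
most `n^{-κ}` in `ℓ¹`, everything is deterministic. The row sum `∑_ℓ h_n(k, ℓ) ℓ` is truncated at a
level `a` through `ℓ ≤ a + (ℓ - a)⁺`: the truncated parts differ by at most `a n^{-κ}`. For the
excess, each column of `h_n` sums to `f_n^*`, so `h_n(k, ·) ≤ f_n^*`, and letting `n → ∞` also
`h(k, ·) ≤ f^*`; since `ℓ ↦ (ℓ - a)⁺` is `1`-Lipschitz, the excess of `f_n^*` exceeds that of `f^*`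
by at most `n^{-ε}`, while the latter is `O(a^{-η})` by the moment assumption. The choice
`a ≈ n^{κ/(η+1)}` balances `a n^{-κ}` against `a^{-η}` and gives the rate `κη/(η+1)`.
-/

section Kantorovich

variable {p q : ℕ → ℝ}

lemma ofReal_one_sub_cdfOf (hp0 : ∀ l, 0 ≤ p l) (hp1 : HasSum p 1) (m : ℕ) :
    ENNReal.ofReal (1 - cdfOf p m) = ∑' l, if m < l then ENNReal.ofReal (p l) else 0 := by
  have htail : HasSum (fun l ↦ if m < l then p l else 0) (1 - cdfOf p m) := by
    have hhead : HasSum (fun l ↦ if m < l then 0 else p l) (cdfOf p m) := by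
      rw [cdfOf, Finset.sum_congr rfl fun l hl ↦
        (if_neg (show ¬ m < l by simpa using hl)).symm]
      exact hasSum_sum_of_ne_finset_zero fun l hl ↦ if_pos (by simpa using hl)
    refine (hp1.sub hhead).congr_fun fun l ↦ ?_
    split_ifs <;> simp
  rw [← htail.tsum_eq, ENNReal.ofReal_tsum_of_nonneg _ htail.summable]
  · simp only [apply_ite ENNReal.ofReal, ENNReal.ofReal_zero]
  · exact fun l ↦ ite_nonneg (hp0 l) le_rfl

lemma tsum_ofReal_mul_sum_range (hp0 : ∀ l, 0 ≤ p l) (hp1 : HasSum p 1) (w : ℕ → ℝ≥0∞) :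
    ∑' l, ENNReal.ofReal (p l) * ∑ m ∈ Finset.range l, w m =
      ∑' m, w m * ENNReal.ofReal (1 - cdfOf p m) := by
  simp_rw [ofReal_one_sub_cdfOf hp0 hp1, ← ENNReal.tsum_mul_left]
  rw [ENNReal.tsum_comm]
  refine tsum_congr fun l ↦ ?_
  rw [tsum_eq_sum (s := Finset.range l), Finset.mul_sum]
  · refine Finset.sum_congr rfl fun m hm ↦ ?_
    rw [if_pos (Finset.mem_range.1 hm), mul_comm]
  · intro m hm
    rw [if_neg (by simpa using hm), mul_zero]

/- The sums `∑ m ∈ range l, w m` with `w ≤ 1` are the increasing `1`-Lipschitz functions of `l`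
vanishing at `0`. -/
lemma tsum_ofReal_mul_sum_range_le_add_d1 (hp0 : ∀ l, 0 ≤ p l) (hp1 : HasSum p 1)
    (hq0 : ∀ l, 0 ≤ q l) (hq1 : HasSum q 1) {w : ℕ → ℝ≥0∞} (hw : ∀ m, w m ≤ 1) :
    ∑' l, ENNReal.ofReal (p l) * ∑ m ∈ Finset.range l, w m ≤
      ∑' l, ENNReal.ofReal (q l) * ∑ m ∈ Finset.range l, w m + d1 p q := by
  rw [tsum_ofReal_mul_sum_range hp0 hp1, tsum_ofReal_mul_sum_range hq0 hq1, d1,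
    ← ENNReal.tsum_add]
  refine ENNReal.tsum_le_tsum fun m ↦ ?_
  have hcdf : 1 - cdfOf p m ≤ 1 - cdfOf q m + |cdfOf p m - cdfOf q m| := by
    linarith [neg_abs_le (cdfOf p m - cdfOf q m)]
  calc w m * ENNReal.ofReal (1 - cdfOf p m)
      ≤ w m * (ENNReal.ofReal (1 - cdfOf q m) + ENNReal.ofReal |cdfOf p m - cdfOf q m|) := by
        gcongr
        exact (ENNReal.ofReal_le_ofReal hcdf).trans ENNReal.ofReal_add_le
    _ ≤ w m * ENNReal.ofReal (1 - cdfOf q m) + ENNReal.ofReal |cdfOf p m - cdfOf q m| := by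
        rw [mul_add]
        gcongr
        exact mul_le_of_le_one_left' (hw m)

lemma ofReal_abs_sub_le_d1 (p q : ℕ → ℝ) (m : ℕ) : ENNReal.ofReal |p m - q m| ≤ d1 p q := by
  cases m with
  | zero => simpa [cdfOf, d1] using
      ENNReal.le_tsum (f := fun m ↦ ENNReal.ofReal |cdfOf p m - cdfOf q m|) 0
  | succ m =>
    have hincr : p (m + 1) - q (m + 1) =
        (cdfOf p (m + 1) - cdfOf q (m + 1)) - (cdfOf p m - cdfOf q m) := by
      simp only [cdfOf, Finset.sum_range_succ]
      ring
    calc ENNReal.ofReal |p (m + 1) - q (m + 1)|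
        ≤ ENNReal.ofReal |cdfOf p (m + 1) - cdfOf q (m + 1)| +
            ENNReal.ofReal |cdfOf p m - cdfOf q m| := by
          rw [hincr]
          exact (ENNReal.ofReal_le_ofReal (abs_sub _ _)).trans ENNReal.ofReal_add_le
      _ = ∑ j ∈ {m + 1, m}, ENNReal.ofReal |cdfOf p j - cdfOf q j| := by
          rw [Finset.sum_pair (Nat.succ_ne_self m)]
      _ ≤ d1 p q := ENNReal.sum_le_tsum _

lemma abs_sub_le_of_d1_le {x : ℝ} (hx : 0 ≤ x) (hd : d1 p q ≤ ENNReal.ofReal x) (m : ℕ) :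
    |p m - q m| ≤ x :=
  (ENNReal.ofReal_le_ofReal_iff hx).1 ((ofReal_abs_sub_le_d1 p q m).trans hd)

end Kantorovich

section StopLoss

variable {p q u v : ℕ → ℝ}

/-- The stop-loss transform `E (X - a)⁺` of a mass function on `ℕ`, which measures the tail of the
first moment beyond the level `a`. It takes values in `ℝ≥0∞` so that no summability is required;
`l - a` is the truncated subtraction of `ℕ`. -/
noncomputable def stopLoss (p : ℕ → ℝ) (a : ℕ) : ℝ≥0∞ :=
  ∑' l : ℕ, ENNReal.ofReal (p l) * (l - a : ℕ)

lemma stopLoss_le_add_d1 (hp0 : ∀ l, 0 ≤ p l) (hp1 : HasSum p 1) (hq0 : ∀ l, 0 ≤ q l)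
    (hq1 : HasSum q 1) (a : ℕ) : stopLoss p a ≤ stopLoss q a + d1 p q := by
  have hexcess (l : ℕ) :
      ((l - a : ℕ) : ℝ≥0∞) = ∑ m ∈ Finset.range l, if a ≤ m then 1 else 0 := by
    rw [Finset.sum_boole, ← Nat.card_Ico]
    congr 2
    ext m
    simp [and_comm]
  simp only [stopLoss, hexcess]
  exact tsum_ofReal_mul_sum_range_le_add_d1 hp0 hp1 hq0 hq1 fun m ↦ by split_ifs <;> simp

lemma natCast_tsub_le_rpow_mul_rpow {η : ℝ} (hη : 0 ≤ η) {a : ℕ} (ha : 1 ≤ a) (l : ℕ) :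
    ((l - a : ℕ) : ℝ) ≤ (a : ℝ) ^ (-η) * (l : ℝ) ^ (1 + η) := by
  rcases le_total l a with hla | hal
  · rw [Nat.sub_eq_zero_of_le hla, Nat.cast_zero]
    positivity
  · have ha0 : (0 : ℝ) < a := by exact_mod_cast ha
    have hal' : (a : ℝ) ≤ l := by exact_mod_cast hal
    have hl0 : (0 : ℝ) < l := ha0.trans_le hal'
    calc ((l - a : ℕ) : ℝ) ≤ l := by exact_mod_cast Nat.sub_le l a
      _ ≤ (a : ℝ) ^ (-η) * (a : ℝ) ^ η * l := by
        rw [← Real.rpow_add ha0, neg_add_cancel, Real.rpow_zero, one_mul]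
      _ ≤ (a : ℝ) ^ (-η) * (l : ℝ) ^ η * l := by gcongr
      _ = (a : ℝ) ^ (-η) * (l : ℝ) ^ (1 + η) := by
        rw [Real.rpow_add hl0, Real.rpow_one]
        ring

lemma stopLoss_le_of_summable_rpow {η : ℝ} (hη : 0 ≤ η) (hq0 : ∀ l, 0 ≤ q l)
    (hq : Summable fun l : ℕ ↦ (l : ℝ) ^ (1 + η) * q l) {a : ℕ} (ha : 1 ≤ a) :
    stopLoss q a ≤ ENNReal.ofReal ((a : ℝ) ^ (-η) * ∑' l : ℕ, (l : ℝ) ^ (1 + η) * q l) := by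
  rw [← tsum_mul_left, ENNReal.ofReal_tsum_of_nonneg
    (fun l ↦ mul_nonneg (by positivity) (mul_nonneg (by positivity) (hq0 l))) (hq.mul_left _)]
  refine ENNReal.tsum_le_tsum fun l ↦ ?_
  rw [← ENNReal.ofReal_natCast, ← ENNReal.ofReal_mul (hq0 l), ← mul_assoc, mul_comm (q l)]
  exact ENNReal.ofReal_le_ofReal
    (mul_le_mul_of_nonneg_right (natCast_tsub_le_rpow_mul_rpow hη ha l) (hq0 l))

lemma tsum_ofReal_abs_sub_mul_le (hup : ∀ l, |u l| ≤ p l) (hvq : ∀ l, |v l| ≤ q l) (a : ℕ) :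
    ∑' l : ℕ, ENNReal.ofReal |u l - v l| * l ≤
      a * ∑' l, ENNReal.ofReal |u l - v l| + (stopLoss p a + stopLoss q a) := by
  rw [stopLoss, stopLoss, ← ENNReal.tsum_add, ← ENNReal.tsum_mul_left, ← ENNReal.tsum_add]
  refine ENNReal.tsum_le_tsum fun l ↦ ?_
  have hsplit : (l : ℝ≥0∞) ≤ a + (l - a : ℕ) := by exact_mod_cast le_add_tsub
  have hdom : ENNReal.ofReal |u l - v l| ≤ ENNReal.ofReal (p l) + ENNReal.ofReal (q l) :=
    (ENNReal.ofReal_le_ofReal ((abs_sub _ _).trans (add_le_add (hup l) (hvq l)))).trans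
      ENNReal.ofReal_add_le
  calc ENNReal.ofReal |u l - v l| * l
      ≤ a * ENNReal.ofReal |u l - v l| + ENNReal.ofReal |u l - v l| * (l - a : ℕ) := by
        rw [mul_comm (a : ℝ≥0∞), ← mul_add]
        gcongr
    _ ≤ a * ENNReal.ofReal |u l - v l| + (ENNReal.ofReal (p l) * (l - a : ℕ) +
          ENNReal.ofReal (q l) * (l - a : ℕ)) := by
        rw [← add_mul]
        gcongr

lemma summable_natCast_mul_of_summable_rpow {r : ℝ} (hr : 1 ≤ r) (hq0 : ∀ l, 0 ≤ q l)
    (hq : Summable fun l : ℕ ↦ (l : ℝ) ^ r * q l) : Summable fun l : ℕ ↦ (l : ℝ) * q l := by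
  refine hq.of_nonneg_of_le (fun l ↦ mul_nonneg l.cast_nonneg (hq0 l)) fun l ↦
    mul_le_mul_of_nonneg_right ?_ (hq0 l)
  rcases l.eq_zero_or_pos with rfl | hl
  · simpa using Real.rpow_nonneg le_rfl r
  · exact Real.self_le_rpow_of_one_le (by exact_mod_cast hl) hr

lemma abs_tsum_mul_sub_tsum_mul_le (hp1 : HasSum p 1) (hq1 : HasSum q 1)
    (hup : ∀ l, |u l| ≤ p l) (hvq : ∀ l, |v l| ≤ q l)
    (hu : Summable fun l : ℕ ↦ u l * l) {η : ℝ} (hη : 0 ≤ η)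
    (hq : Summable fun l : ℕ ↦ (l : ℝ) ^ (1 + η) * q l) {x y : ℝ} (hx : 0 ≤ x)
    (hd : d1 p q ≤ ENNReal.ofReal x) (huv : ∑' l, |u l - v l| ≤ y) {a : ℕ} (ha : 1 ≤ a) :
    |∑' l : ℕ, u l * l - ∑' l : ℕ, v l * l| ≤
      a * y + 2 * ((a : ℝ) ^ (-η) * ∑' l : ℕ, (l : ℝ) ^ (1 + η) * q l) + x := by
  have hp0 (l : ℕ) : 0 ≤ p l := (abs_nonneg _).trans (hup l)
  have hq0 (l : ℕ) : 0 ≤ q l := (abs_nonneg _).trans (hvq l)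
  have hv : Summable fun l : ℕ ↦ v l * l := by
    refine (summable_natCast_mul_of_summable_rpow (by linarith) hq0 hq).of_norm_bounded fun l ↦ ?_
    rw [norm_mul, Real.norm_natCast, mul_comm]
    exact mul_le_mul_of_nonneg_left (hvq l) l.cast_nonneg
  have huv_summable : Summable fun l ↦ |u l - v l| :=
    ((hp1.summable.of_norm_bounded hup).sub (hq1.summable.of_norm_bounded hvq)).abs
  have hy : 0 ≤ y := (tsum_nonneg fun l ↦ abs_nonneg _).trans huv
  set B := (a : ℝ) ^ (-η) * ∑' l : ℕ, (l : ℝ) ^ (1 + η) * q l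
  have hB : 0 ≤ B :=
    mul_nonneg (by positivity) (tsum_nonneg fun l ↦ mul_nonneg (by positivity) (hq0 l))
  have hqB : stopLoss q a ≤ ENNReal.ofReal B := stopLoss_le_of_summable_rpow hη hq0 hq ha
  have hpB : stopLoss p a ≤ ENNReal.ofReal B + ENNReal.ofReal x :=
    (stopLoss_le_add_d1 hp0 hp1 hq0 hq1 a).trans (add_le_add hqB hd)
  have hℓ1 : ∑' l, ENNReal.ofReal |u l - v l| ≤ ENNReal.ofReal y := by
    rw [← ENNReal.ofReal_tsum_of_nonneg (fun _ ↦ abs_nonneg _) huv_summable]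
    exact ENNReal.ofReal_le_ofReal huv
  rw [← hu.tsum_sub hv, ← ENNReal.ofReal_le_ofReal_iff (by positivity)]
  calc ENNReal.ofReal |∑' l : ℕ, (u l * l - v l * l)|
      ≤ ∑' l : ℕ, ENNReal.ofReal |u l - v l| * l := by
        simpa only [← sub_mul, Real.enorm_eq_ofReal_abs, abs_mul, Nat.abs_cast,
          ENNReal.ofReal_mul (abs_nonneg _), ENNReal.ofReal_natCast] using
          enorm_tsum_le_tsum_enorm (f := fun l : ℕ ↦ u l * l - v l * l)
    _ ≤ a * ∑' l, ENNReal.ofReal |u l - v l| + (stopLoss p a + stopLoss q a) :=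
        tsum_ofReal_abs_sub_mul_le hup hvq a
    _ ≤ a * ENNReal.ofReal y + (ENNReal.ofReal B + ENNReal.ofReal x + ENNReal.ofReal B) := by
        gcongr
    _ = ENNReal.ofReal (a * y + 2 * B + x) := by
        rw [← ENNReal.ofReal_natCast, ← ENNReal.ofReal_mul (by positivity),
          ← ENNReal.ofReal_add hB hx, ← ENNReal.ofReal_add (by positivity) hB,
          ← ENNReal.ofReal_add (by positivity) (by positivity)]
        congr 1
        ring

end StopLoss

lemma abs_div_sub_div_le {A A' p q B x : ℝ} (hq : 0 < q) (hpq : |p - q| ≤ x) (hx : 2 * x ≤ q)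
    (hA : |A' - A| ≤ B) :
    |A' / p - A / q| ≤ 2 / q * B + 2 * |A| / q ^ 2 * x := by
  have hp : q / 2 ≤ p := by linarith [(abs_le.1 hpq).1]
  have hp0 : 0 < p := by linarith
  have hB : 0 ≤ B := (abs_nonneg _).trans hA
  have hx0 : 0 ≤ x := (abs_nonneg _).trans hpq
  calc |A' / p - A / q| = |(A' - A) / p + A * (q - p) / (p * q)| := by
        congr 1
        field_simp
        ring
    _ ≤ |A' - A| / p + |A| * |p - q| / (p * q) := by
        refine (abs_add_le _ _).trans_eq ?_
        rw [abs_div, abs_div, abs_mul, abs_of_pos hp0, abs_of_pos (mul_pos hp0 hq), abs_sub_comm q]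
    _ ≤ B / (q / 2) + |A| * x / (q / 2 * q) := by gcongr
    _ = 2 / q * B + 2 * |A| / q ^ 2 * x := by
        field_simp

section SizeBiased

variable {f : ℕ → ℝ}

lemma meanPMF_pos (hf0 : ∀ l, 0 ≤ f l) (hf : Summable fun l : ℕ ↦ (l : ℝ) * f l) {k : ℕ}
    (hk0 : 0 < k) (hk : 0 < f k) : 0 < meanPMF f :=
  hf.tsum_pos (fun l ↦ mul_nonneg l.cast_nonneg (hf0 l)) k (mul_pos (by exact_mod_cast hk0) hk)

lemma hasSum_sizeBiased (hf : Summable fun l : ℕ ↦ (l : ℝ) * f l) (hmean : meanPMF f ≠ 0) :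
    HasSum (sizeBiased f) 1 := by
  have hdiv := hf.hasSum.div_const (meanPMF f)
  rwa [← meanPMF, div_self hmean] at hdiv

lemma summable_rpow_mul_sizeBiased {r : ℝ} (hr : r + 1 ≠ 0)
    (hf : Summable fun l : ℕ ↦ (l : ℝ) ^ (r + 1) * f l) :
    Summable fun l : ℕ ↦ (l : ℝ) ^ r * sizeBiased f l := by
  refine (hf.div_const (meanPMF f)).congr fun l ↦ ?_
  rw [Real.rpow_add_one' l.cast_nonneg hr, sizeBiased]
  ring

end SizeBiased

section Multigraph

variable {n : ℕ} {d : Fin n → ℕ} {g : Fin n → Fin n → ℕ} {k l : ℕ}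

lemma hasSum_empSB (hd : degSum d ≠ 0) : HasSum (empSB d) 1 := by
  have hnum : HasSum (fun l : ℕ ↦ ∑ i, if d i = l then (l : ℝ) else 0) (degSum d) := by
    rw [degSum, Nat.cast_sum]
    refine hasSum_sum fun i _ ↦ (hasSum_ite_eq (d i) (d i : ℝ)).congr_fun fun l ↦ ?_
    by_cases hl : l = d i <;> simp [hl, eq_comm]
  have hdiv := hnum.div_const (degSum d : ℝ)
  rwa [div_self (Nat.cast_ne_zero.2 hd)] at hdiv

lemma empSB_eq_zero (hl : ∀ i, d i ≠ l) : empSB d l = 0 := by simp [empSB, hl]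

lemma empDens_eq_zero (hl : ∀ i, d i ≠ l) : empDens d l = 0 := by simp [empDens, hl]

lemma jointDens_eq_zero (hl : ∀ i, d i ≠ l) : jointDens d g k l = 0 := by
  simp [jointDens, hl]

lemma degSum_ne_zero_of_empSB_pos (hk : 0 < empSB d k) : degSum d ≠ 0 := fun h0 ↦ by
  simp [empSB, h0] at hk

lemma empDens_pos_of_empSB_pos (hk : 0 < empSB d k) : 0 < empDens d k := by
  obtain ⟨i, hi⟩ : ∃ i, d i = k := by
    by_contra! hne
    exact hk.ne' (empSB_eq_zero hne)
  refine div_pos (Finset.sum_pos' (fun j _ ↦ by positivity) ⟨i, Finset.mem_univ i, by simp [hi]⟩) ?_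
  exact_mod_cast i.pos

lemma abs_jointDens_le_empSB (hsym : ∀ i j, g i j = g j i) (hdeg : ∀ i, degOf g i = d i)
    (k l : ℕ) : |jointDens d g k l| ≤ empSB d l := by
  have hcol (j : Fin n) : ∑ i, (if d i = k ∧ d j = l then (g i j : ℝ) else 0) ≤
      if d j = l then (l : ℝ) else 0 := by
    by_cases hj : d j = l
    · calc ∑ i, (if d i = k ∧ d j = l then (g i j : ℝ) else 0) ≤ ∑ i, (g i j : ℝ) :=
            Finset.sum_le_sum fun i _ ↦ by split_ifs <;> simp
        _ = (degOf g j : ℝ) := by simp only [degOf, hsym _ j, Nat.cast_sum]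
        _ = if d j = l then (l : ℝ) else 0 := by rw [hdeg, hj, if_pos rfl]
    · simp [hj]
  rw [abs_of_nonneg (div_nonneg (by positivity) (Nat.cast_nonneg _)), jointDens, empSB,
    Finset.sum_comm]
  gcongr with j
  exact hcol j

lemma summable_jointDens_mul (d : Fin n → ℕ) (g : Fin n → Fin n → ℕ) (k : ℕ) (w : ℕ → ℝ) :
    Summable fun l ↦ jointDens d g k l * w l :=
  summable_of_ne_finset_zero (s := Finset.univ.image d) fun l hl ↦ by
    rw [jointDens_eq_zero (by simpa using hl), zero_mul]

lemma tsum_abs_jointDens_sub_le_tsum_tsum (h : ℕ → ℕ → ℝ) (hk : 0 < empDens d k) :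
    ∑' l, |jointDens d g k l - h k l| ≤
      ∑' k, ∑' l, if 0 < empDens d k then |jointDens d g k l - h k l| else 0 := by
  have hsum : Summable fun k ↦
      ∑' l, if 0 < empDens d k then |jointDens d g k l - h k l| else 0 :=
    summable_of_ne_finset_zero (s := Finset.univ.image d) fun k hk ↦ by
      simp [empDens_eq_zero (show ∀ i, d i ≠ k by simpa using hk)]
  simpa only [if_pos hk] using
    hsum.le_tsum k fun _ _ ↦ tsum_nonneg fun _ ↦ ite_nonneg (abs_nonneg _) le_rfl

/-- The good event on which the convergence is deterministic: the size-biased degree density is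
within `x` of `q` in the Kantorovich–Rubinstein distance, and, if the degree `k` occurs, the `k`-th
row of the joint degree distribution is within `y` of `v` in `ℓ¹`. -/
structure IsCloseAt (d : Fin n → ℕ) (g : Fin n → Fin n → ℕ) (k : ℕ) (q v : ℕ → ℝ) (x y : ℝ) :
    Prop where
  d1_le : d1 (empSB d) q ≤ ENNReal.ofReal x
  tsum_le : 0 < empDens d k → ∑' l, |jointDens d g k l - v l| ≤ y

namespace IsCloseAt

variable {q v : ℕ → ℝ} {x y : ℝ}

lemma empSB_pos (hc : IsCloseAt d g k q v x y) (hk : 0 < q k) (hx : 0 ≤ x) (hxq : 2 * x ≤ q k) :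
    0 < empSB d k := by
  linarith [(abs_le.1 (abs_sub_le_of_d1_le hx hc.d1_le k)).1]

lemma abs_le (hc : IsCloseAt d g k q v x y) (hsym : ∀ i j, g i j = g j i)
    (hdeg : ∀ i, degOf g i = d i) (hv : Summable v) (hk : 0 < q k) (hx : 0 ≤ x)
    (hxq : 2 * x ≤ q k) (l : ℕ) : |v l| ≤ q l + x + y := by
  have hrow : |jointDens d g k l - v l| ≤ y := by
    have hu : Summable fun l ↦ jointDens d g k l := by
      simpa using summable_jointDens_mul d g k 1
    exact ((hu.sub hv).abs.le_tsum l fun _ _ ↦ abs_nonneg _).trans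
      (hc.tsum_le (empDens_pos_of_empSB_pos (hc.empSB_pos hk hx hxq)))
  have hdens := (_root_.abs_le.1 (abs_sub_le_of_d1_le hx hc.d1_le l)).2
  have hdom := abs_jointDens_le_empSB hsym hdeg k l
  have htri := abs_sub_abs_le_abs_sub (v l) (jointDens d g k l)
  rw [abs_sub_comm] at htri
  linarith

lemma abs_ANND_sub_le (hc : IsCloseAt d g k q v x y) (hsym : ∀ i j, g i j = g j i)
    (hdeg : ∀ i, degOf g i = d i) (hq1 : HasSum q 1) (hvq : ∀ l, |v l| ≤ q l) {η : ℝ}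
    (hη : 0 ≤ η) (hq : Summable fun l : ℕ ↦ (l : ℝ) ^ (1 + η) * q l) (hk : 0 < q k) (hx : 0 ≤ x)
    (hxq : 2 * x ≤ q k) {a : ℕ} (ha : 1 ≤ a) :
    |ANND d g k - (∑' l : ℕ, v l * l) / q k| ≤
      2 / q k * (a * y + 2 * ((a : ℝ) ^ (-η) * ∑' l : ℕ, (l : ℝ) ^ (1 + η) * q l) + x) +
        2 * |∑' l : ℕ, v l * l| / q k ^ 2 * x := by
  have hpos := hc.empSB_pos hk hx hxq
  have hdens := empDens_pos_of_empSB_pos hpos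
  rw [ANND, if_pos hdens]
  refine abs_div_sub_div_le hk (abs_sub_le_of_d1_le hx hc.d1_le k) hxq ?_
  exact abs_tsum_mul_sub_tsum_mul_le (hasSum_empSB (degSum_ne_zero_of_empSB_pos hpos)) hq1
    (abs_jointDens_le_empSB hsym hdeg k) hvq (summable_jointDens_mul d g k _) hη hq hx hc.d1_le
    (hc.tsum_le hdens) ha

end IsCloseAt

end Multigraph

section Rate

lemma tendsto_natCast_rpow_neg {r : ℝ} (hr : 0 < r) :
    Tendsto (fun n : ℕ ↦ (n : ℝ) ^ (-r)) atTop (nhds 0) :=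
  (tendsto_rpow_neg_atTop hr).comp tendsto_natCast_atTop_atTop

lemma eventually_const_mul_rpow_neg_le {δ ρ : ℝ} (hδρ : δ < ρ) (C : ℝ) {c : ℝ} (hc : 0 < c) :
    ∀ᶠ n : ℕ in atTop, C * (n : ℝ) ^ (-ρ) ≤ c * (n : ℝ) ^ (-δ) := by
  have hlim : Tendsto (fun n : ℕ ↦ C * (n : ℝ) ^ (-(ρ - δ))) atTop (nhds 0) := by
    simpa using (tendsto_natCast_rpow_neg (sub_pos.2 hδρ)).const_mul C
  filter_upwards [hlim.eventually_le_const hc, eventually_gt_atTop 0] with n hn hn0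
  have hn0' : (0 : ℝ) < n := by exact_mod_cast hn0
  calc C * (n : ℝ) ^ (-ρ) = C * (n : ℝ) ^ (-(ρ - δ)) * (n : ℝ) ^ (-δ) := by
        rw [mul_assoc, ← Real.rpow_add hn0']
        ring_nf
    _ ≤ c * (n : ℝ) ^ (-δ) := by gcongr

lemma exists_nat_mul_rpow_neg_le_and_rpow_neg_le {z κ η : ℝ} (hz : 1 ≤ z) (hκ : 0 ≤ κ)
    (hη : 0 ≤ η) :
    ∃ a : ℕ, 1 ≤ a ∧ a * z ^ (-κ) ≤ 2 * z ^ (-(κ * η / (η + 1))) ∧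
      (a : ℝ) ^ (-η) ≤ z ^ (-(κ * η / (η + 1))) := by
  have hz0 : 0 < z := by linarith
  have hη1 : η + 1 ≠ 0 := by positivity
  set b := z ^ (κ / (η + 1)) with hb
  have hb1 : 1 ≤ b := Real.one_le_rpow hz (by positivity)
  have hmul : b * z ^ (-κ) = z ^ (-(κ * η / (η + 1))) := by
    rw [hb, ← Real.rpow_add hz0]
    congr 1
    field_simp
    ring
  have hpow : b ^ (-η) = z ^ (-(κ * η / (η + 1))) := by
    rw [hb, ← Real.rpow_mul hz0.le]
    congr 1
    field_simp
  refine ⟨⌈b⌉₊, Nat.one_le_ceil_iff.2 (by linarith), ?_, ?_⟩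
  · rw [← hmul, ← mul_assoc]
    gcongr
    linarith [Nat.ceil_lt_add_one (zero_le_one.trans hb1)]
  · rw [← hpow]
    exact Real.rpow_le_rpow_of_nonpos (by linarith) (Nat.le_ceil b) (by linarith)

lemma eventually_exists_nat_error_le {ε κ η δ : ℝ} (hκ : 0 ≤ κ) (hη : 0 ≤ η)
    (hδ : δ < min ε (κ * η / (η + 1))) {C M : ℝ} (hC : 0 ≤ C) (hM : 0 ≤ M) (C' : ℝ) :
    ∀ᶠ n : ℕ in atTop, ∃ a : ℕ, 1 ≤ a ∧
      C * (a * (n : ℝ) ^ (-κ) + 2 * ((a : ℝ) ^ (-η) * M) + (n : ℝ) ^ (-ε)) +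
        C' * (n : ℝ) ^ (-ε) ≤ (n : ℝ) ^ (-δ) := by
  obtain ⟨hδε, hδκ⟩ := lt_min_iff.1 hδ
  filter_upwards [eventually_const_mul_rpow_neg_le hδε (C + C') one_half_pos,
    eventually_const_mul_rpow_neg_le hδκ (C * (2 + 2 * M)) one_half_pos,
    eventually_ge_atTop 1] with n hn_deg hn_level hn1
  obtain ⟨a, ha, hmul, hpow⟩ := exists_nat_mul_rpow_neg_le_and_rpow_neg_le
    (z := n) (by exact_mod_cast hn1) hκ hη
  refine ⟨a, ha, ?_⟩
  set z := (n : ℝ) ^ (-(κ * η / (η + 1)))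
  calc C * (a * (n : ℝ) ^ (-κ) + 2 * ((a : ℝ) ^ (-η) * M) + (n : ℝ) ^ (-ε)) +
        C' * (n : ℝ) ^ (-ε)
      ≤ C * (2 * z + 2 * (z * M) + (n : ℝ) ^ (-ε)) + C' * (n : ℝ) ^ (-ε) := by gcongr
    _ = C * (2 + 2 * M) * z + (C + C') * (n : ℝ) ^ (-ε) := by ring
    _ ≤ (n : ℝ) ^ (-δ) := by linarith

end Rate

section HighProbability

variable {ι : Type*} {l : Filter ι} {Ω : ι → Type*} [∀ i, MeasurableSpace (Ω i)]
  {μ : ∀ i, Measure (Ω i)} {A B : ∀ i, Set (Ω i)}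

lemma tendsto_measureReal_zero_of_subset [∀ i, IsFiniteMeasure (μ i)]
    (hA : Tendsto (fun i ↦ (μ i).real (A i)) l (nhds 0)) (hBA : ∀ i, B i ⊆ A i) :
    Tendsto (fun i ↦ (μ i).real (B i)) l (nhds 0) :=
  squeeze_zero (fun _ ↦ measureReal_nonneg) (fun i ↦ measureReal_mono (hBA i)) hA

lemma tendsto_measureReal_lt_zero_of_lt_max {β : Type*} [LinearOrder β]
    [∀ i, IsFiniteMeasure (μ i)] {x : ι → β} {X Y : ∀ i, Ω i → β}
    (hXY : Tendsto (fun i ↦ (μ i).real {ω | x i < max (X i ω) (Y i ω)}) l (nhds 0)) :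
    Tendsto (fun i ↦ (μ i).real {ω | x i < Y i ω}) l (nhds 0) :=
  tendsto_measureReal_zero_of_subset hXY fun _ ↦
    Set.ofPred_subset_ofPred.2 fun _ ↦ lt_max_of_lt_right

lemma tendsto_measureReal_union_zero (hA : Tendsto (fun i ↦ (μ i).real (A i)) l (nhds 0))
    (hB : Tendsto (fun i ↦ (μ i).real (B i)) l (nhds 0)) :
    Tendsto (fun i ↦ (μ i).real (A i ∪ B i)) l (nhds 0) :=
  squeeze_zero (fun _ ↦ measureReal_nonneg) (fun _ ↦ measureReal_union_le _ _)
    (by simpa using hA.add hB)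

variable [∀ i, IsProbabilityMeasure (μ i)]

lemma tendsto_measureReal_one_of_compl_subset (hA : Tendsto (fun i ↦ (μ i).real (A i)) l (nhds 0))
    (hB : ∀ᶠ i in l, (A i)ᶜ ⊆ B i) : Tendsto (fun i ↦ (μ i).real (B i)) l (nhds 1) := by
  refine tendsto_of_tendsto_of_tendsto_of_le_of_le' (by simpa using hA.const_sub 1)
    tendsto_const_nhds ?_ (.of_forall fun i ↦ measureReal_le_one)
  filter_upwards [hB] with i hi
  have hcover : (μ i).real Set.univ ≤ (μ i).real (A i) + (μ i).real (B i) :=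
    (measureReal_mono (Set.compl_subset_iff_union.1 hi).ge).trans (measureReal_union_le _ _)
  linarith [probReal_univ (μ := μ i)]

lemma eventually_exists_notMem_of_tendsto_measureReal_zero
    (hA : Tendsto (fun i ↦ (μ i).real (A i)) l (nhds 0)) : ∀ᶠ i in l, ∃ ω, ω ∉ A i := by
  filter_upwards [hA.eventually_lt_const one_pos] with i hi
  by_contra! hall
  rw [Set.eq_univ_of_forall hall, probReal_univ] at hi
  exact hi.false

end HighProbability

section Convergence

variable {Ω : ℕ → Type*} [∀ n, MeasurableSpace (Ω n)] {μ : ∀ n, Measure (Ω n)}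
  [∀ n, IsProbabilityMeasure (μ n)] {D : ∀ n, Ω n → Fin n → ℕ} {G : ∀ n, Ω n → Fin n → Fin n → ℕ}
  {q v : ℕ → ℝ} {k : ℕ} {ε κ : ℝ}

lemma abs_le_of_tendsto_measureReal_not_isCloseAt (hsym : ∀ n ω i j, G n ω i j = G n ω j i)
    (hdeg : ∀ n ω i, degOf (G n ω) i = D n ω i) (hv : Summable v) (hk : 0 < q k) (hε : 0 < ε)
    (hκ : 0 < κ)
    (hclose : Tendsto (fun n : ℕ ↦ (μ n).real
      {ω | ¬ IsCloseAt (D n ω) (G n ω) k q v ((n : ℝ) ^ (-ε)) ((n : ℝ) ^ (-κ))}) atTop (nhds 0))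
    (l : ℕ) : |v l| ≤ q l := by
  have hlim : Tendsto (fun n : ℕ ↦ q l + (n : ℝ) ^ (-ε) + (n : ℝ) ^ (-κ)) atTop (nhds (q l)) := by
    simpa using ((tendsto_natCast_rpow_neg hε).const_add (q l)).add (tendsto_natCast_rpow_neg hκ)
  refine ge_of_tendsto hlim ?_
  filter_upwards [eventually_exists_notMem_of_tendsto_measureReal_zero hclose,
    (tendsto_natCast_rpow_neg hε).eventually_le_const (half_pos hk)] with n ⟨ω, hω⟩ hn
  exact (not_not.1 hω).abs_le (hsym n ω) (hdeg n ω) hv hk (by positivity) (by linarith) l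

theorem tendsto_measureReal_abs_ANND_sub_le (hsym : ∀ n ω i j, G n ω i j = G n ω j i)
    (hdeg : ∀ n ω i, degOf (G n ω) i = D n ω i) (hq1 : HasSum q 1) (hv : Summable v)
    (hk : 0 < q k) (hε : 0 < ε) (hκ : 0 < κ)
    (hclose : Tendsto (fun n : ℕ ↦ (μ n).real
      {ω | ¬ IsCloseAt (D n ω) (G n ω) k q v ((n : ℝ) ^ (-ε)) ((n : ℝ) ^ (-κ))}) atTop (nhds 0))
    {η : ℝ} (hη : 0 ≤ η) (hq : Summable fun l : ℕ ↦ (l : ℝ) ^ (1 + η) * q l) {δ : ℝ}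
    (hδ : δ < min ε (κ * η / (η + 1))) :
    Tendsto (fun n : ℕ ↦ (μ n).real
      {ω | |ANND (D n ω) (G n ω) k - (∑' l : ℕ, v l * l) / q k| ≤ (n : ℝ) ^ (-δ)})
      atTop (nhds 1) := by
  have hvq := abs_le_of_tendsto_measureReal_not_isCloseAt hsym hdeg hv hk hε hκ hclose
  have hM : 0 ≤ ∑' l : ℕ, (l : ℝ) ^ (1 + η) * q l :=
    tsum_nonneg fun l ↦ mul_nonneg (by positivity) ((abs_nonneg _).trans (hvq l))
  refine tendsto_measureReal_one_of_compl_subset hclose ?_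
  filter_upwards [(tendsto_natCast_rpow_neg hε).eventually_le_const (half_pos hk),
    eventually_exists_nat_error_le hκ.le hη hδ (div_pos two_pos hk).le hM
      (2 * |∑' l : ℕ, v l * l| / q k ^ 2)] with n hn ⟨a, ha, hbound⟩ ω hω
  exact ((not_not.1 hω).abs_ANND_sub_le (hsym n ω) (hdeg n ω) hq1 hvq hη hq hk (by positivity)
    (by linarith) ha).trans hbound

lemma tendsto_measureReal_lt_tsum_abs_jointDens_sub {h : ℕ → ℕ → ℝ}
    (hG : Tendsto (fun n : ℕ ↦ (μ n).real
      {ω | (n : ℝ) ^ (-κ) < ∑' k, ∑' l, if 0 < empDens (D n ω) k then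
        |jointDens (D n ω) (G n ω) k l - h k l| else 0}) atTop (nhds 0)) (k : ℕ) :
    Tendsto (fun n : ℕ ↦ (μ n).real
      {ω | 0 < empDens (D n ω) k ∧
        (n : ℝ) ^ (-κ) < ∑' l, |jointDens (D n ω) (G n ω) k l - h k l|}) atTop (nhds 0) :=
  tendsto_measureReal_zero_of_subset hG fun _ _ hω ↦
    hω.2.trans_le (tsum_abs_jointDens_sub_le_tsum_tsum h hω.1)

theorem stmt4_general (hsym : ∀ n ω i j, G n ω i j = G n ω j i)
    (hdeg : ∀ n ω i, degOf (G n ω) i = D n ω i) {f : ℕ → ℝ} (hf0 : ∀ l, 0 ≤ f l) (hε : 0 < ε)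
    (hD : Tendsto (fun n : ℕ ↦ (μ n).real
      {ω | ENNReal.ofReal ((n : ℝ) ^ (-ε)) < d1 (empSB (D n ω)) (sizeBiased f)}) atTop (nhds 0))
    (hv : Summable v) (hκ : 0 < κ)
    (hG : Tendsto (fun n : ℕ ↦ (μ n).real
      {ω | 0 < empDens (D n ω) k ∧
        (n : ℝ) ^ (-κ) < ∑' l, |jointDens (D n ω) (G n ω) k l - v l|}) atTop (nhds 0))
    {η : ℝ} (hη : 0 ≤ η) (hmom : Summable fun l : ℕ ↦ (l : ℝ) ^ (2 + η) * f l)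
    (hk : 0 < f k) {δ : ℝ} (hδ : δ < min ε (κ * η / (η + 1))) :
    Tendsto (fun n : ℕ ↦ (μ n).real
      {ω | |ANND (D n ω) (G n ω) k -
          (if 0 < sizeBiased f k then (∑' l : ℕ, v l * l) / sizeBiased f k else 0)| ≤
        (n : ℝ) ^ (-δ)}) atTop (nhds 1) := by
  rcases k.eq_zero_or_pos with rfl | hk0
  · have hexact (n : ℕ) : (0 : ℝ) ≤ (n : ℝ) ^ (-δ) := by positivity
    simp [ANND, empSB, sizeBiased, hexact]
  have hmean : Summable fun l : ℕ ↦ (l : ℝ) * f l :=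
    summable_natCast_mul_of_summable_rpow (by linarith) hf0 hmom
  have hmean_pos : 0 < meanPMF f := meanPMF_pos hf0 hmean hk0 hk
  have hq : Summable fun l : ℕ ↦ (l : ℝ) ^ (1 + η) * sizeBiased f l :=
    summable_rpow_mul_sizeBiased (by positivity) (by convert hmom using 4; ring)
  have hsb : 0 < sizeBiased f k := div_pos (mul_pos (by exact_mod_cast hk0) hk) hmean_pos
  simp only [if_pos hsb]
  refine tendsto_measureReal_abs_ANND_sub_le hsym hdeg (hasSum_sizeBiased hmean hmean_pos.ne')
    hv hsb hε hκ (tendsto_measureReal_zero_of_subset (tendsto_measureReal_union_zero hD hG)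
      fun n ω hω ↦ ?_) hη hq hδ
  by_contra! hgood
  simp only [Set.mem_union, Set.mem_ofPred_eq, not_or, not_and, not_lt] at hgood
  exact hω ⟨hgood.1, hgood.2⟩

end Convergence

/-- General convergence of the ANND: for a sequence of random multigraphs
satisfying the degree regularity assumption (i), the joint-distribution regularity
assumption (ii), and a finite `(2+η)`-moment of the limiting degree distribution (iii),
`Φ_n(k) → Φ(k)` in probability, with rate `n^{-δ}` for every
`0 < δ < min{ε, κη/(η+1)}` and every fixed `k` with `f(k) > 0`. -/
theorem stmt4
    {Ω : Type*} [MeasurableSpace Ω] (μ : Measure Ω) [IsProbabilityMeasure μ]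
    (D : (n : ℕ) → Ω → Fin n → ℕ) (G : (n : ℕ) → Ω → Fin n → Fin n → ℕ)
    (hsym : ∀ n ω i j, G n ω i j = G n ω j i)
    (hdiag : ∀ n ω i, Even (G n ω i i))
    (hdeg : ∀ n ω i, degOf (G n ω) i = D n ω i)
    -- the limiting degree distribution
    (f : ℕ → ℝ) (hf0 : ∀ k, 0 ≤ f k) (hf1 : HasSum f 1)
    -- Assumption 1 (regularity of the degrees)
    (α ε : ℝ) (hα : 0 < α) (hε : 0 < ε)
    (hOmega : (fun n : ℕ =>
        (μ {ω | ENNReal.ofReal ((n : ℝ) ^ (-ε)) <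
            max (d1 (empDens (D n ω)) f)
              (d1 (empSB (D n ω)) (sizeBiased f))}).toReal)
      =O[atTop] fun n : ℕ => (n : ℝ) ^ (-α))
    -- Assumption 2 (regularity of the joint distribution)
    (h : ℕ → ℕ → ℝ) (hh0 : ∀ k l, 0 ≤ h k l)
    (hh1 : HasSum (fun p : ℕ × ℕ => h p.1 p.2) 1)
    (hhsupp : ∀ k, h k 0 = 0 ∧ h 0 k = 0)
    (κ : ℝ) (hκ : 0 < κ)
    (hGamma : Tendsto (fun n : ℕ =>
        (μ {ω | (n : ℝ) ^ (-κ) <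
            ∑' k : ℕ, ∑' l : ℕ,
              (if 0 < empDens (D n ω) k then
                |jointDens (D n ω) (G n ω) k l - h k l| else 0)}).toReal)
      atTop (nhds 0))
    -- finite (2+η)-moment of the limit distribution
    (η : ℝ) (hη0 : 0 < η) (hη1 : η < 1)
    (hmom : Summable fun k : ℕ => (k : ℝ) ^ (2 + η) * f k)
    -- conclusion
    (k : ℕ) (hk : 0 < f k)
    (δ : ℝ) (hδ0 : 0 < δ) (hδ : δ < min ε (κ * η / (η + 1))) :
    Tendsto (fun n : ℕ =>
        (μ {ω | |ANND (D n ω) (G n ω) k -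
            (if 0 < sizeBiased f k then
              (∑' l : ℕ, h k l * (l : ℝ)) / sizeBiased f k else 0)| ≤
          (n : ℝ) ^ (-δ)}).toReal)
      atTop (nhds 1) := by
  have hdegree := hOmega.trans_tendsto (tendsto_natCast_rpow_neg hα)
  exact stmt4_general hsym hdeg hf0 hε
    (tendsto_measureReal_lt_zero_of_lt_max (μ := fun _ ↦ μ) hdegree) (hh1.summable.prod_factor k) hκ
    (tendsto_measureReal_lt_tsum_abs_jointDens_sub hGamma k) hη0.le hmom hk hδ

end ANNDPaper
end

section
/- Let 𝒟 be regularly varying with exponent 1 < γ < 2 and let {G_n}_{n≥1} be generated by the erased configuration model with degree sequences IID(𝒟), coupled with the underlying configuration model multigraph. Set a = (γ − 1)²/(2γ) > 0 and let k be such that f^*(k) > 0, where f^*(k) = k f(k)/E[𝒟] and f is the density of 𝒟. Then lim_{n→∞} P(|Φ̂_n(k) − Φ_n(k)| > n^{2/γ − 1 − a}) = 0, where Φ_n is the average nearest neighbor degree computed on the configuration model multigraph and Φ̂_n is the one computed on the erased graph. -/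
open MeasureTheory Filter
open scoped ENNReal NNReal BigOperators

namespace ANNDPaper

/-!
Call a stub erased if it lies on a self-loop or on a surplus copy of a multiple edge, and let `E`
be the number of erased stubs. Only nodes with an erased stub change their degree, so if all
degrees are at most `M` and `N` nodes have degree `k` after the erasure, then
`|Φ̂ₙ(k) - Φₙ(k)| ≤ 3 M E / N`.

Given the degrees, a switching argument bounds the mean and the second factorial moment of the
number `G i j` of edges between two nodes by constant multiples of `x` and `x ^ 2`, where
`x = d i * d j / L`. Since `min x (x ^ 2) ≤ x ^ s` for `1 ≤ s ≤ 2`, the conditional mean of `E` is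
at most of order `L ^ (1 - s) * ∑ i, d i ^ s + L ^ (-s) * ∑ i ≠ j, d i ^ s * d j ^ s`. This has
order `n ^ (2 - s)` in expectation if `𝒟` has a finite `s`-th moment, in particular for `s < γ`.
Together with `M ≤ n ^ (1 / γ + ε)` and `N ≥ c n`, which hold with high probability, the
difference is of order `n ^ (1 / γ + 1 - γ + ε')`, and `1 / γ + 1 - γ < 2 / γ - 1 - a`.
-/

section PerfectMatching

open Finset

variable {V : Type*}

/-- The perfect matchings of a set `V`, encoded as fixed-point-free involutions: `σ s` is the
partner of `s`. -/
abbrev PerfectMatching (V : Type*) : Type _ :=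
  {σ : Equiv.Perm V // ∀ s, σ s ≠ s ∧ σ (σ s) = s}

namespace PerfectMatching

/-- The matching obtained from `σ` by exchanging the roles of `a` and `b`. It is the switching
that compares the numbers of matchings joining `s` to `a` and to `b`. -/
def conjSwap [DecidableEq V] (a b : V) (σ : PerfectMatching V) : PerfectMatching V :=
  ⟨Equiv.swap a b * σ.1 * Equiv.swap a b, fun s =>
    ⟨fun h => (σ.2 (Equiv.swap a b s)).1 (by simpa using congrArg (Equiv.swap a b) h),
      by simp [(σ.2 _).2]⟩⟩

section DecidableEq

variable [DecidableEq V]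

lemma conjSwap_apply (a b : V) (σ : PerfectMatching V) (s : V) :
    (conjSwap a b σ).1 s = Equiv.swap a b (σ.1 (Equiv.swap a b s)) := rfl

lemma conjSwap_apply_of_ne {a b s : V} (σ : PerfectMatching V) (ha : s ≠ a) (hb : s ≠ b) :
    (conjSwap a b σ).1 s = Equiv.swap a b (σ.1 s) := by
  rw [conjSwap_apply, Equiv.swap_apply_of_ne_of_ne ha hb]

lemma conjSwap_involutive (a b : V) : Function.Involutive (conjSwap a b) := fun σ =>
  Subtype.ext <| Equiv.ext fun s => by simp [conjSwap_apply]

/-- The number of pairs of partners with one member in `A` and the other in `B`, counted from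
the side of `A`; a pair inside `A` is counted twice when `B = A`. -/
def edgesBetween (σ : PerfectMatching V) (A B : Finset V) : ℕ := #{s ∈ A | σ.1 s ∈ B}

lemma edgesBetween_comm (σ : PerfectMatching V) (A B : Finset V) :
    edgesBetween σ A B = edgesBetween σ B A := by
  refine card_bij' (fun s _ => σ.1 s) (fun s _ => σ.1 s) ?_ ?_ ?_ ?_ <;>
    simp +contextual [(σ.2 _).2]

lemma edgesBetween_mul_pred (σ : PerfectMatching V) (A B : Finset V) :
    edgesBetween σ A B * (edgesBetween σ A B - 1)
      = #{p ∈ A.offDiag | σ.1 p.1 ∈ B ∧ σ.1 p.2 ∈ B} := by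
  rw [Nat.mul_sub_one, edgesBetween, ← offDiag_card]
  congr 1
  ext p
  simp only [mem_offDiag, mem_filter]
  tauto

end DecidableEq

variable [Fintype V] [DecidableEq V]

lemma card_filter_apply_mem (P : PerfectMatching V → Prop) [DecidablePred P] (B : Finset V)
    (s : V) :
    #{σ : PerfectMatching V | P σ ∧ σ.1 s ∈ B}
      = ∑ t ∈ B, #{σ : PerfectMatching V | P σ ∧ σ.1 s = t} := by
  simp_rw [← filter_filter]
  exact (sum_card_fiberwise_eq_card_filter _ B fun σ : PerfectMatching V => σ.1 s).symm

lemma card_filter_apply_eq_le_of_conjSwap (P : PerfectMatching V → Prop) [DecidablePred P]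
    {s t u : V} (hu : s ≠ u) (hP : ∀ σ, P σ → σ.1 s = t → P (conjSwap t u σ)) :
    #{σ : PerfectMatching V | P σ ∧ σ.1 s = t} ≤ #{σ : PerfectMatching V | P σ ∧ σ.1 s = u} := by
  refine card_le_card_of_injOn (conjSwap t u) (fun σ hσ => ?_)
    (conjSwap_involutive t u).injective.injOn
  obtain ⟨hPσ, hst⟩ : P σ ∧ σ.1 s = t := by simpa using hσ
  have ht : s ≠ t := fun h => (σ.2 s).1 (hst.trans h.symm)
  simpa [conjSwap_apply_of_ne σ ht hu, hst] using hP σ hPσ hst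

/-- If switching the partner `t` of `s` against any `u ∈ T` preserves `P`, then the partner of `s`
is at least as spread out as a uniform element of `T`. -/
lemma card_mul_card_filter_apply_eq_le (P : PerfectMatching V → Prop) [DecidablePred P]
    {s t : V} {T : Finset V} (hT : s ∉ T)
    (hP : ∀ u ∈ T, ∀ σ, P σ → σ.1 s = t → P (conjSwap t u σ)) :
    #T * #{σ : PerfectMatching V | P σ ∧ σ.1 s = t} ≤ #{σ : PerfectMatching V | P σ} :=
  calc #T * #{σ : PerfectMatching V | P σ ∧ σ.1 s = t}
      ≤ ∑ u ∈ T, #{σ : PerfectMatching V | P σ ∧ σ.1 s = u} :=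
        card_nsmul_le_sum T _ _ fun u hu => card_filter_apply_eq_le_of_conjSwap P
          (fun h => hT (h ▸ hu)) (hP u hu)
    _ = #{σ : PerfectMatching V | P σ ∧ σ.1 s ∈ T} := (card_filter_apply_mem P T s).symm
    _ ≤ #{σ : PerfectMatching V | P σ} :=
        card_le_card (monotone_filter_right _ fun _ _ h => h.1)

lemma card_sub_one_mul_card_filter_apply_eq_le (s t : V) :
    (Fintype.card V - 1) * #{σ : PerfectMatching V | σ.1 s = t}
      ≤ Fintype.card (PerfectMatching V) := by
  simpa [card_erase_of_mem] using card_mul_card_filter_apply_eq_le (fun _ => True) (t := t)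
    (notMem_erase s univ) (by simp)

lemma card_sub_three_mul_card_filter_apply_eq_and_le {s t s' : V} (hs : s' ≠ s) (hst : s' ≠ t)
    (t' : V) :
    (Fintype.card V - 3) * #{σ : PerfectMatching V | σ.1 s = t ∧ σ.1 s' = t'}
      ≤ #{σ : PerfectMatching V | σ.1 s = t} := by
  have hcard : Fintype.card V - 3 ≤ #(univ \ {s, t, s'}) := by
    rw [card_sdiff_of_subset (subset_univ _), card_univ]
    exact Nat.sub_le_sub_left card_le_three _
  refine (Nat.mul_le_mul_right _ hcard).trans (card_mul_card_filter_apply_eq_le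
    (fun σ => σ.1 s = t) (T := univ \ {s, t, s'}) (by simp) fun u hu σ hσ hσ' => ?_)
  have hts : t' ≠ s := fun h => hst (by rw [← (σ.2 s').2, hσ', h, hσ])
  have htt : t' ≠ t := fun h => hs (σ.1.injective (by rw [hσ, hσ', h]))
  simp only [Finset.mem_sdiff, mem_univ, mem_insert, mem_singleton, not_or, true_and] at hu
  rw [conjSwap_apply_of_ne σ hts.symm (Ne.symm hu.1), hσ,
    Equiv.swap_apply_of_ne_of_ne htt.symm (Ne.symm hu.2.1)]

lemma card_sub_one_mul_sum_edgesBetween_le (A B : Finset V) :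
    (Fintype.card V - 1) * ∑ σ : PerfectMatching V, edgesBetween σ A B
      ≤ #A * #B * Fintype.card (PerfectMatching V) := by
  have hsum : ∑ σ : PerfectMatching V, edgesBetween σ A B
      = ∑ s ∈ A, ∑ t ∈ B, #{σ : PerfectMatching V | σ.1 s = t} := by
    simp_rw [edgesBetween, card_filter, sum_comm (s := univ) (t := A), ← card_filter]
    exact sum_congr rfl fun s _ => by simpa using card_filter_apply_mem (fun _ => True) B s
  rw [hsum]
  simp only [mul_sum]
  calc _ ≤ ∑ _s ∈ A, ∑ _t ∈ B, Fintype.card (PerfectMatching V) :=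
        sum_le_sum fun s _ => sum_le_sum fun t _ => card_sub_one_mul_card_filter_apply_eq_le s t
    _ = _ := by simp [mul_assoc]

lemma card_sub_one_mul_sum_edgesBetween_mul_pred_le {A B : Finset V} (hAB : Disjoint A B) :
    (Fintype.card V - 1) * ((Fintype.card V - 3) *
        ∑ σ : PerfectMatching V, edgesBetween σ A B * (edgesBetween σ A B - 1))
      ≤ (#A * #B) ^ 2 * Fintype.card (PerfectMatching V) := by
  have hsum : ∑ σ : PerfectMatching V, edgesBetween σ A B * (edgesBetween σ A B - 1)
      = ∑ p ∈ A.offDiag, ∑ t' ∈ B, ∑ t ∈ B,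
          #{σ : PerfectMatching V | σ.1 p.1 = t ∧ σ.1 p.2 = t'} := by
    simp_rw [edgesBetween_mul_pred, card_filter, sum_comm (s := univ) (t := A.offDiag),
      ← card_filter]
    refine sum_congr rfl fun p _ => ?_
    rw [card_filter_apply_mem (fun σ => σ.1 p.1 ∈ B) B p.2]
    refine sum_congr rfl fun t' _ => ?_
    simp_rw [and_comm (b := _ = t'), card_filter_apply_mem (fun σ => σ.1 p.2 = t') B p.1]
  rw [hsum]
  simp only [mul_sum]
  calc _ ≤ ∑ p ∈ A.offDiag, ∑ _t' ∈ B, ∑ t ∈ B,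
          (Fintype.card V - 1) * #{σ : PerfectMatching V | σ.1 p.1 = t} := by
        refine sum_le_sum fun p hp => sum_le_sum fun t' _ => sum_le_sum fun t ht =>
          Nat.mul_le_mul_left _ ?_
        obtain ⟨-, hp2, hne⟩ := mem_offDiag.1 hp
        exact card_sub_three_mul_card_filter_apply_eq_and_le hne.symm
          (fun h => disjoint_left.1 hAB hp2 (h ▸ ht)) t'
    _ ≤ ∑ _p ∈ A.offDiag, ∑ _t' ∈ B, ∑ _t ∈ B, Fintype.card (PerfectMatching V) :=
        sum_le_sum fun p _ => sum_le_sum fun _ _ => sum_le_sum fun t _ =>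
          card_sub_one_mul_card_filter_apply_eq_le p.1 t
    _ = #A.offDiag * (#B ^ 2 * Fintype.card (PerfectMatching V)) := by simp [sq, mul_assoc]
    _ ≤ #A ^ 2 * (#B ^ 2 * Fintype.card (PerfectMatching V)) := by
        gcongr
        rw [offDiag_card, sq]
        exact Nat.sub_le _ _
    _ = _ := by ring

lemma expect_edgesBetween_le (hV : 6 ≤ Fintype.card V) (A B : Finset V) :
    𝔼 σ : PerfectMatching V, (edgesBetween σ A B : ℝ) ≤ 2 * (#A * #B / Fintype.card V) := by
  have hcount : ((Fintype.card V : ℝ) - 1) * ∑ σ : PerfectMatching V, (edgesBetween σ A B : ℝ)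
      ≤ #A * #B * Fintype.card (PerfectMatching V) := by
    have := card_sub_one_mul_sum_edgesBetween_le A B
    rw [← Nat.cast_le (α := ℝ)] at this
    push_cast [Nat.cast_sub (show 1 ≤ Fintype.card V by omega)] at this
    exact this
  have hV' : (6 : ℝ) ≤ Fintype.card V := by exact_mod_cast hV
  rw [Fintype.expect_eq_sum_div_card]
  refine div_le_of_le_mul₀ (by positivity) (by positivity) ?_
  rw [← mul_div_assoc, div_mul_eq_mul_div, le_div_iff₀ (by positivity)]
  have hS : 0 ≤ ∑ σ : PerfectMatching V, (edgesBetween σ A B : ℝ) := by positivity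
  nlinarith

lemma expect_edgesBetween_pred_le (hV : 6 ≤ Fintype.card V) {A B : Finset V}
    (hAB : Disjoint A B) :
    𝔼 σ : PerfectMatching V, ((edgesBetween σ A B - 1 : ℕ) : ℝ)
      ≤ 4 * (#A * #B / Fintype.card V) ^ 2 := by
  have hpred (e : ℕ) : e - 1 ≤ e * (e - 1) := by
    rcases e with _ | e
    · rfl
    · exact Nat.le_mul_of_pos_left _ e.succ_pos
  have hcount : ((Fintype.card V : ℝ) - 1) * (((Fintype.card V : ℝ) - 3) *
      ∑ σ : PerfectMatching V, ((edgesBetween σ A B - 1 : ℕ) : ℝ))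
      ≤ (#A * #B) ^ 2 * Fintype.card (PerfectMatching V) := by
    have := (Nat.mul_le_mul_left (Fintype.card V - 1) (Nat.mul_le_mul_left (Fintype.card V - 3)
      (sum_le_sum fun (σ : PerfectMatching V) _ => hpred (edgesBetween σ A B)))).trans
      (card_sub_one_mul_sum_edgesBetween_mul_pred_le hAB)
    rw [← Nat.cast_le (α := ℝ)] at this
    rw [Nat.cast_mul, Nat.cast_mul, Nat.cast_sub (by omega), Nat.cast_sub (by omega)] at this
    exact_mod_cast this
  have hV' : (6 : ℝ) ≤ Fintype.card V := by exact_mod_cast hV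
  rw [Fintype.expect_eq_sum_div_card]
  refine div_le_of_le_mul₀ (by positivity) (by positivity) ?_
  rw [div_pow, ← mul_div_assoc, div_mul_eq_mul_div, le_div_iff₀ (by positivity)]
  have hS : 0 ≤ ∑ σ : PerfectMatching V, ((edgesBetween σ A B - 1 : ℕ) : ℝ) := by positivity
  have hsq : (Fintype.card V : ℝ) ^ 2 / 4
      ≤ ((Fintype.card V : ℝ) - 1) * ((Fintype.card V : ℝ) - 3) := by nlinarith
  nlinarith [mul_le_mul_of_nonneg_right hsq hS]

end PerfectMatching

end PerfectMatching

section ConfigurationModel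

open Finset PerfectMatching

variable {n : ℕ}

instance (d : Fin n → ℕ) : Fintype (Matching d) :=
  inferInstanceAs (Fintype (PerfectMatching (Stubs d)))

lemma card_stubs (d : Fin n → ℕ) : Fintype.card (Stubs d) = degSum d := by
  simp [Fintype.card_sigma, degSum]

/-- The stubs attached to the node `i`. -/
def nodeStubs (d : Fin n → ℕ) (i : Fin n) : Finset (Stubs d) :=
  univ.map (Function.Embedding.sigmaMk i)

lemma mem_nodeStubs {d : Fin n → ℕ} {i : Fin n} {s : Stubs d} : s ∈ nodeStubs d i ↔ s.1 = i := by
  obtain ⟨j, s⟩ := s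
  simp only [nodeStubs, Finset.mem_map, mem_univ, true_and]
  constructor
  · rintro ⟨t, ht⟩
    exact (congrArg Sigma.fst ht).symm
  · rintro rfl
    exact ⟨s, rfl⟩

lemma card_nodeStubs (d : Fin n → ℕ) (i : Fin n) : #(nodeStubs d i) = d i := by
  simp [nodeStubs]

lemma disjoint_nodeStubs (d : Fin n → ℕ) {i j : Fin n} (hij : i ≠ j) :
    Disjoint (nodeStubs d i) (nodeStubs d j) :=
  disjoint_left.2 fun _ hi hj => hij ((mem_nodeStubs.1 hi).symm.trans (mem_nodeStubs.1 hj))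

lemma edgesBetween_nodeStubs {d : Fin n → ℕ} (σ : PerfectMatching (Stubs d)) (i j : Fin n) :
    edgesBetween σ (nodeStubs d i) (nodeStubs d j) = #{s : Fin (d i) | (σ.1 ⟨i, s⟩).1 = j} := by
  rw [edgesBetween, show nodeStubs d i = univ.map (Function.Embedding.sigmaMk i) from rfl,
    filter_map, card_map]
  simp only [Function.comp_apply, mem_nodeStubs, Function.Embedding.sigmaMk_apply]

lemma cmEdges_eq_edgesBetween (d : Fin n → ℕ) (σ : Matching d) (i j : Fin n) :
    cmEdges d σ i j = edgesBetween (V := Stubs d) σ (nodeStubs d i) (nodeStubs d j) :=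
  (edgesBetween_nodeStubs σ i j).symm

lemma cmEdges_comm (d : Fin n → ℕ) (σ : Matching d) (i j : Fin n) :
    cmEdges d σ i j = cmEdges d σ j i := by
  simp only [cmEdges_eq_edgesBetween]
  exact edgesBetween_comm _ _ _

lemma degOf_cmEdges (d : Fin n → ℕ) (σ : Matching d) : degOf (cmEdges d σ) = d := by
  funext i
  simpa [degOf, cmEdges] using
    sum_card_fiberwise_eq_card_filter univ univ fun s : Fin (d i) => (σ.1 ⟨i, s⟩).1

/-- The number of stubs of the node `i` that are lost when self-loops are removed and multiple
edges are merged. -/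
def erasedStubs (g : Fin n → Fin n → ℕ) (i : Fin n) : ℕ := ∑ j, (g i j - erase g i j)

lemma sum_erasedStubs (g : Fin n → Fin n → ℕ) :
    ∑ i, erasedStubs g i = ∑ i, g i i + ∑ p ∈ univ.offDiag, (g p.1 p.2 - 1) := by
  have hdiag : ∑ p ∈ diag univ, (g p.1 p.2 - erase g p.1 p.2) = ∑ i, g i i := by
    simp [erase]
  simp only [erasedStubs]
  rw [← sum_product', ← diag_union_offDiag, sum_union (disjoint_diag_offDiag _), hdiag]
  refine congrArg _ (sum_congr rfl fun p hp => ?_)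
  rw [erase, if_neg (mem_offDiag.1 hp).2.2]
  omega

/-- A bound for the expected number of erased stubs in the configuration model with degrees `u`
and `L` stubs. The first sum bounds the self-loops, the second the multiple edges. -/
noncomputable def erasureBound (s L : ℝ) (u : Fin n → ℝ) : ℝ :=
  2 * L ^ (1 - s) * ∑ i, u i ^ s + 4 * L ^ (-s) * ∑ p ∈ univ.offDiag, u p.1 ^ s * u p.2 ^ s

lemma erasureBound_mono {s L L' : ℝ} {u v : Fin n → ℝ} (hs : 1 ≤ s) (hL : 0 < L) (hLL' : L ≤ L')
    (hu : ∀ i, 0 ≤ u i) (huv : ∀ i, u i ≤ v i) : erasureBound s L' u ≤ erasureBound s L v := by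
  have hL1 : L' ^ (1 - s) ≤ L ^ (1 - s) :=
    Real.rpow_le_rpow_of_nonpos hL hLL' (by linarith)
  have hL2 : L' ^ (-s) ≤ L ^ (-s) := Real.rpow_le_rpow_of_nonpos hL hLL' (by linarith)
  have hv (i : Fin n) : 0 ≤ v i := (hu i).trans (huv i)
  have hs0 : 0 ≤ s := by linarith
  have hsum : ∑ i, u i ^ s ≤ ∑ i, v i ^ s :=
    sum_le_sum fun i _ => Real.rpow_le_rpow (hu i) (huv i) hs0
  have hsum' : ∑ p ∈ univ.offDiag, u p.1 ^ s * u p.2 ^ s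
      ≤ ∑ p ∈ univ.offDiag, v p.1 ^ s * v p.2 ^ s :=
    sum_le_sum fun p _ => mul_le_mul (Real.rpow_le_rpow (hu _) (huv _) hs0)
      (Real.rpow_le_rpow (hu _) (huv _) hs0) (Real.rpow_nonneg (hu _) s) (Real.rpow_nonneg (hv _) s)
  have hnonneg : 0 ≤ ∑ i, u i ^ s := sum_nonneg fun i _ => Real.rpow_nonneg (hu i) s
  have hnonneg' : 0 ≤ ∑ p ∈ univ.offDiag, u p.1 ^ s * u p.2 ^ s :=
    sum_nonneg fun p _ => mul_nonneg (Real.rpow_nonneg (hu _) s) (Real.rpow_nonneg (hu _) s)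
  unfold erasureBound
  gcongr

lemma min_self_sq_le_rpow {x s : ℝ} (hx : 0 ≤ x) (hs1 : 1 ≤ s) (hs2 : s ≤ 2) :
    min x (x ^ 2) ≤ x ^ s := by
  rcases le_total x 1 with hx1 | hx1
  · rcases hx.eq_or_lt with rfl | hx0
    · exact (min_le_left _ _).trans (Real.rpow_nonneg le_rfl s)
    · rw [← Real.rpow_two]
      exact (min_le_right _ _).trans (Real.rpow_le_rpow_of_exponent_ge hx0 hx1 hs2)
  · calc min x (x ^ 2) ≤ x ^ (1 : ℝ) := by simp
      _ ≤ x ^ s := Real.rpow_le_rpow_of_exponent_le hx1 hs1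

lemma expect_cmEdges_self_le {d : Fin n → ℕ} {s : ℝ} (hs : s ≤ 2) (hd : 6 ≤ degSum d)
    (i : Fin n) :
    𝔼 σ : Matching d, (cmEdges d σ i i : ℝ) ≤ 2 * (degSum d : ℝ) ^ (1 - s) * (d i : ℝ) ^ s := by
  have hL : (0 : ℝ) < degSum d := by exact_mod_cast (show 0 < degSum d by omega)
  have hle : (d i : ℝ) ≤ degSum d := by
    exact_mod_cast single_le_sum (f := d) (fun _ _ => Nat.zero_le _) (mem_univ i)
  have hexp : 𝔼 σ : Matching d, (cmEdges d σ i i : ℝ) ≤ 2 * (d i * d i / degSum d) := by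
    have := expect_edgesBetween_le (V := Stubs d) (by rwa [card_stubs])
      (nodeStubs d i) (nodeStubs d i)
    rw [card_nodeStubs, card_stubs] at this
    simp only [cmEdges_eq_edgesBetween]
    exact this
  refine hexp.trans ?_
  rcases (Nat.cast_nonneg (d i) : (0 : ℝ) ≤ d i).eq_or_lt with h0 | h0
  · rw [← h0, mul_zero, zero_div, mul_zero]
    positivity
  have hsplit : (d i : ℝ) * d i = (d i : ℝ) ^ s * (d i : ℝ) ^ (2 - s) := by
    rw [← Real.rpow_add h0, add_sub_cancel, Real.rpow_two, sq]
  have hLpow : (degSum d : ℝ) ^ (1 - s) = (degSum d : ℝ) ^ (2 - s) / degSum d := by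
    rw [← Real.rpow_sub_one hL.ne']
    ring_nf
  rw [hsplit, hLpow, mul_assoc, div_mul_eq_mul_div, mul_comm ((degSum d : ℝ) ^ (2 - s))]
  gcongr

lemma expect_cmEdges_pred_le {d : Fin n → ℕ} {s : ℝ} (hs1 : 1 ≤ s) (hs2 : s ≤ 2)
    (hd : 6 ≤ degSum d) {i j : Fin n} (hij : i ≠ j) :
    𝔼 σ : Matching d, ((cmEdges d σ i j - 1 : ℕ) : ℝ)
      ≤ 4 * (degSum d : ℝ) ^ (-s) * ((d i : ℝ) ^ s * (d j : ℝ) ^ s) := by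
  have hL : (0 : ℝ) < degSum d := by exact_mod_cast (show 0 < degSum d by omega)
  have hlin : 𝔼 σ : Matching d, ((cmEdges d σ i j - 1 : ℕ) : ℝ)
      ≤ 2 * (d i * d j / degSum d) := by
    have := expect_edgesBetween_le (V := Stubs d) (by rwa [card_stubs])
      (nodeStubs d i) (nodeStubs d j)
    rw [card_nodeStubs, card_nodeStubs, card_stubs] at this
    refine le_trans (expect_le_expect fun σ _ => ?_) this
    rw [cmEdges_eq_edgesBetween]
    exact_mod_cast Nat.sub_le _ _
  have hquad : 𝔼 σ : Matching d, ((cmEdges d σ i j - 1 : ℕ) : ℝ)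
      ≤ 4 * (d i * d j / degSum d) ^ 2 := by
    have := expect_edgesBetween_pred_le (V := Stubs d) (by rwa [card_stubs])
      (disjoint_nodeStubs d hij)
    rw [card_nodeStubs, card_nodeStubs, card_stubs] at this
    simp only [cmEdges_eq_edgesBetween]
    exact this
  have hx : (0 : ℝ) ≤ d i * d j / degSum d := by positivity
  calc 𝔼 σ : Matching d, ((cmEdges d σ i j - 1 : ℕ) : ℝ)
      ≤ 4 * min (d i * d j / degSum d : ℝ) ((d i * d j / degSum d) ^ 2) := by
        rw [mul_min_of_nonneg _ _ (by norm_num)]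
        exact le_min (hlin.trans (by linarith)) hquad
    _ ≤ 4 * (d i * d j / degSum d : ℝ) ^ s := by gcongr; exact min_self_sq_le_rpow hx hs1 hs2
    _ = _ := by
        rw [Real.div_rpow (by positivity) hL.le, Real.mul_rpow (by positivity) (by positivity),
          Real.rpow_neg hL.le]
        ring

lemma expect_sum_erasedStubs_le {d : Fin n → ℕ} {s : ℝ} (hs1 : 1 ≤ s) (hs2 : s ≤ 2)
    (hd : 6 ≤ degSum d) :
    𝔼 σ : Matching d, ((∑ i, erasedStubs (cmEdges d σ) i : ℕ) : ℝ)
      ≤ erasureBound s (degSum d) fun i => d i := by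
  simp only [sum_erasedStubs, Nat.cast_add, Nat.cast_sum, expect_add_distrib, erasureBound,
    mul_sum, expect_sum_comm]
  gcongr with i _ p hp
  · exact expect_cmEdges_self_le hs2 hd i
  · exact expect_cmEdges_pred_le hs1 hs2 hd (mem_offDiag.1 hp).2.2

lemma uniformMatching_le_one (d : Fin n → ℕ) (S : Set (Matching d)) :
    uniformMatching d S ≤ 1 := by
  refine (measure_mono S.subset_univ).trans ?_
  rw [uniformMatching, Measure.smul_apply, smul_eq_mul,
    Measure.count_apply MeasurableSpace.measurableSet_top, Set.encard_univ,
    ENat.card_eq_coe_natCard]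
  exact ENNReal.inv_mul_le_one _

lemma lintegral_uniformMatching (d : Fin n → ℕ) {F : Matching d → ℝ} (hF : ∀ σ, 0 ≤ F σ) :
    ∫⁻ σ, ENNReal.ofReal (F σ) ∂uniformMatching d = ENNReal.ofReal (𝔼 σ, F σ) := by
  rw [uniformMatching, lintegral_smul_measure, lintegral_count' Measurable.of_discrete,
    tsum_fintype, ← ENNReal.ofReal_sum_of_nonneg fun σ _ => hF σ, Nat.card_eq_fintype_card,
    Fintype.expect_eq_sum_div_card, smul_eq_mul, mul_comm]
  cases isEmpty_or_nonempty (Matching d)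
  · simp
  · rw [ENNReal.ofReal_div_of_pos (by positivity), ENNReal.ofReal_natCast, div_eq_mul_inv]

lemma uniformMatching_lt_le (d : Fin n → ℕ) {F : Matching d → ℝ} (hF : ∀ σ, 0 ≤ F σ) {b : ℝ}
    (hb : 0 < b) : uniformMatching d {σ | b < F σ} ≤ ENNReal.ofReal ((𝔼 σ, F σ) / b) := by
  calc uniformMatching d {σ | b < F σ}
      ≤ uniformMatching d {σ | ENNReal.ofReal b ≤ ENNReal.ofReal (F σ)} :=
        measure_mono fun σ hσ => ENNReal.ofReal_le_ofReal (le_of_lt hσ)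
    _ ≤ (∫⁻ σ, ENNReal.ofReal (F σ) ∂uniformMatching d) / ENNReal.ofReal b :=
        meas_ge_le_lintegral_div Measurable.of_discrete.aemeasurable (by simpa using hb)
          ENNReal.ofReal_ne_top
    _ ≤ ENNReal.ofReal ((𝔼 σ, F σ) / b) := by
        rw [ENNReal.ofReal_div_of_pos hb]
        gcongr
        exact (lintegral_uniformMatching d hF).le

end ConfigurationModel

section NearestNeighborDegree

open Finset

variable {n : ℕ}

/-- The number of nodes of degree `k`. -/
def nodeCount (d : Fin n → ℕ) (k : ℕ) : ℕ := #{i | d i = k}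

/-- The sum of `d j` over all edges `i → j` starting at a node `i` with `d i = k`. This is the
unnormalised average nearest neighbor degree. -/
def nbrDegSum (d : Fin n → ℕ) (g : Fin n → Fin n → ℕ) (k : ℕ) : ℕ :=
  ∑ i, if d i = k then ∑ j, g i j * d j else 0

lemma mul_nodeCount_le_degSum (d : Fin n → ℕ) (k : ℕ) : k * nodeCount d k ≤ degSum d := by
  calc k * nodeCount d k = ∑ i with d i = k, d i := by
        rw [sum_congr rfl fun i hi => (mem_filter.1 hi).2, sum_const, smul_eq_mul, mul_comm]
        rfl
    _ ≤ degSum d := sum_le_sum_of_subset (subset_univ _)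

lemma tsum_jointDens_mul (d : Fin n → ℕ) (g : Fin n → Fin n → ℕ) (k : ℕ) :
    ∑' l : ℕ, jointDens d g k l * (l : ℝ) = nbrDegSum d g k / degSum d := by
  have hterm (l : ℕ) : jointDens d g k l * (l : ℝ) = ∑ i, ∑ j,
      if l = d j then (if d i = k then (g i j * d j / degSum d : ℝ) else 0) else 0 := by
    rw [jointDens, sum_div, sum_mul]
    refine sum_congr rfl fun i _ => ?_
    rw [sum_div, sum_mul]
    refine sum_congr rfl fun j _ => ?_
    split_ifs with h hl hi hi hl
    all_goals grind
  simp_rw [hterm]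
  rw [(hasSum_sum fun i _ => hasSum_sum fun j _ => hasSum_ite_eq (d j) _).tsum_eq]
  simp only [nbrDegSum, Nat.cast_sum, sum_div]
  refine sum_congr rfl fun i _ => ?_
  split_ifs <;> simp [sum_div]

lemma ANND_eq (d : Fin n → ℕ) (g : Fin n → Fin n → ℕ) (k : ℕ) :
    ANND d g k = nbrDegSum d g k / (k * nodeCount d k) := by
  have hdens : empDens d k = nodeCount d k / n := by simp [empDens, nodeCount]
  have hSB : empSB d k = k * nodeCount d k / degSum d := by
    simp [empSB, nodeCount, ← sum_filter, mul_comm]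
  rw [ANND, tsum_jointDens_mul, hSB, hdens]
  split_ifs with hpos
  · rcases eq_or_ne (degSum d) 0 with hL | hL
    · have hd (i : Fin n) : d i = 0 := sum_eq_zero_iff.1 hL i (mem_univ i)
      simp [nbrDegSum, hd]
    · exact div_div_div_cancel_right₀ (by exact_mod_cast hL) _ _
  · have hN : nodeCount d k = 0 := by
      by_contra hN
      have hn : 0 < n := Fin.pos (card_pos.1 (Nat.pos_of_ne_zero hN)).choose
      exact hpos (by positivity)
    simp [hN]

section Bounded

variable {d : Fin n → ℕ} {g : Fin n → Fin n → ℕ} {M k : ℕ}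

lemma sum_mul_le_degOf_mul (hM : ∀ i, d i ≤ M) (i : Fin n) :
    ∑ j, g i j * d j ≤ degOf g i * M := by
  rw [degOf, sum_mul]
  gcongr
  exact hM _

lemma nbrDegSum_degOf_le (hM : ∀ i, degOf g i ≤ M) (k : ℕ) :
    nbrDegSum (degOf g) g k ≤ M * (k * nodeCount (degOf g) k) := by
  calc nbrDegSum (degOf g) g k ≤ ∑ i, if degOf g i = k then k * M else 0 := by
        refine sum_le_sum fun i _ => ?_
        split_ifs with hi
        · exact hi ▸ sum_mul_le_degOf_mul hM i
        · exact le_rfl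
    _ = M * (k * nodeCount (degOf g) k) := by
        rw [← sum_filter, sum_const, smul_eq_mul, nodeCount]
        ring

lemma ANND_degOf_le (hM : ∀ i, degOf g i ≤ M) (k : ℕ) : ANND (degOf g) g k ≤ M := by
  rw [ANND_eq]
  exact div_le_of_le_mul₀ (by positivity) (by positivity)
    (by exact_mod_cast nbrDegSum_degOf_le hM k)

lemma nbrDegSum_degOf_eq (hM : ∀ i, degOf g i ≤ M) (k : ℕ) :
    (nbrDegSum (degOf g) g k : ℝ) = ANND (degOf g) g k * (k * nodeCount (degOf g) k) := by
  rw [ANND_eq, div_mul_cancel_of_imp]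
  intro h0
  have hle := nbrDegSum_degOf_le hM k
  rw [show k * nodeCount (degOf g) k = 0 by exact_mod_cast h0, mul_zero] at hle
  exact_mod_cast Nat.le_zero.1 hle

end Bounded

section Erasure

variable {g : Fin n → Fin n → ℕ} {M k : ℕ}

lemma erase_le (g : Fin n → Fin n → ℕ) (i j : Fin n) : erase g i j ≤ g i j := by
  unfold erase
  split_ifs
  exacts [Nat.zero_le _, min_le_left _ _]

lemma erasedStubs_add_eraseDeg (g : Fin n → Fin n → ℕ) (i : Fin n) :
    erasedStubs g i + eraseDeg g i = degOf g i := by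
  rw [erasedStubs, eraseDeg, degOf, ← sum_add_distrib]
  exact sum_congr rfl fun j _ => Nat.sub_add_cancel (erase_le g i j)

lemma erase_eq_of_erasedStubs_eq_zero {i : Fin n} (hi : erasedStubs g i = 0) (j : Fin n) :
    erase g i j = g i j :=
  (erase_le g i j).antisymm (Nat.sub_eq_zero_iff_le.1 (sum_eq_zero_iff.1 hi j (mem_univ j)))

lemma abs_nodeCount_eraseDeg_sub_le (g : Fin n → Fin n → ℕ) (k : ℕ) :
    |(nodeCount (degOf g) k : ℝ) - nodeCount (eraseDeg g) k| ≤ ∑ i, (erasedStubs g i : ℝ) := by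
  simp only [nodeCount, card_filter, Nat.cast_sum, ← sum_sub_distrib]
  refine (abs_sum_le_sum_abs _ _).trans (sum_le_sum fun i _ => ?_)
  have hdeg := erasedStubs_add_eraseDeg g i
  rcases Nat.eq_zero_or_pos (erasedStubs g i) with h0 | h0
  · simp [show eraseDeg g i = degOf g i by omega, h0]
  · have h1 : (1 : ℝ) ≤ erasedStubs g i := by exact_mod_cast h0
    split_ifs <;> simp [h1]

/-- A node without erased stubs feels the erasure only through the degrees of its neighbours; the
contribution of any other node is bounded by `k * M`. -/
lemma abs_nbrDegSum_term_sub_le (hM : ∀ i, degOf g i ≤ M) (i : Fin n) :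
    |((if eraseDeg g i = k then ∑ j, erase g i j * eraseDeg g j else 0 : ℕ) : ℝ)
        - (if degOf g i = k then ∑ j, g i j * degOf g j else 0 : ℕ)|
      ≤ ∑ j, (g i j : ℝ) * erasedStubs g j + k * M * erasedStubs g i := by
  have hdeg := erasedStubs_add_eraseDeg g
  have hnonneg : (0 : ℝ) ≤ ∑ j, (g i j : ℝ) * erasedStubs g j := by positivity
  rcases Nat.eq_zero_or_pos (erasedStubs g i) with h0 | h0
  · have hsum : ∑ j, g i j * degOf g j
        = ∑ j, g i j * erasedStubs g j + ∑ j, g i j * eraseDeg g j := by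
      simp_rw [← hdeg, mul_add, sum_add_distrib]
    rw [show eraseDeg g i = degOf g i by have := hdeg i; omega, h0]
    simp_rw [erase_eq_of_erasedStubs_eq_zero h0]
    split_ifs
    · rw [abs_sub_comm, hsum, Nat.cast_add, add_sub_cancel_right, Nat.abs_cast]
      simp
    · simpa using hnonneg
  · have hM' (j : Fin n) : eraseDeg g j ≤ M := by have := hdeg j; have := hM j; omega
    have herased : (if eraseDeg g i = k then ∑ j, erase g i j * eraseDeg g j else 0) ≤ k * M := by
      split_ifs with hi
      · exact hi ▸ sum_mul_le_degOf_mul hM' i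
      · exact Nat.zero_le _
    have horig : (if degOf g i = k then ∑ j, g i j * degOf g j else 0) ≤ k * M := by
      split_ifs with hi
      · exact hi ▸ sum_mul_le_degOf_mul hM i
      · exact Nat.zero_le _
    calc _ ≤ (k * M : ℝ) := abs_sub_le_of_nonneg_of_le (Nat.cast_nonneg _)
          (by exact_mod_cast herased) (Nat.cast_nonneg _) (by exact_mod_cast horig)
      _ ≤ k * M * erasedStubs g i := le_mul_of_one_le_right (by positivity) (by exact_mod_cast h0)
      _ ≤ _ := le_add_of_nonneg_left hnonneg

lemma abs_nbrDegSum_eraseDeg_sub_le (hg : ∀ i j, g i j = g j i) (hM : ∀ i, degOf g i ≤ M)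
    (k : ℕ) :
    |(nbrDegSum (eraseDeg g) (erase g) k : ℝ) - nbrDegSum (degOf g) g k|
      ≤ (k + 1) * M * ∑ i, (erasedStubs g i : ℝ) := by
  have hsymm : ∑ i, ∑ j, (g i j : ℝ) * erasedStubs g j ≤ M * ∑ i, (erasedStubs g i : ℝ) := by
    rw [sum_comm, mul_sum]
    refine sum_le_sum fun j _ => ?_
    rw [← sum_mul]
    simp_rw [hg _ j, ← Nat.cast_sum]
    gcongr
    exact hM j
  calc |(nbrDegSum (eraseDeg g) (erase g) k : ℝ) - nbrDegSum (degOf g) g k|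
      ≤ ∑ i, (∑ j, (g i j : ℝ) * erasedStubs g j + k * M * erasedStubs g i) := by
        rw [nbrDegSum, nbrDegSum, Nat.cast_sum, Nat.cast_sum, ← sum_sub_distrib]
        exact (abs_sum_le_sum_abs _ _).trans
          (sum_le_sum fun i _ => abs_nbrDegSum_term_sub_le hM i)
    _ ≤ (k + 1) * M * ∑ i, (erasedStubs g i : ℝ) := by
        rw [sum_add_distrib, ← mul_sum]
        linarith

theorem abs_ANND_erase_sub_le (hg : ∀ i j, g i j = g j i) (hM : ∀ i, degOf g i ≤ M) (hk : 1 ≤ k)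
    (hN : 0 < nodeCount (eraseDeg g) k) :
    |ANND (eraseDeg g) (erase g) k - ANND (degOf g) g k|
      ≤ 3 * M * (∑ i, (erasedStubs g i : ℝ)) / nodeCount (eraseDeg g) k := by
  set E : ℝ := ∑ i, (erasedStubs g i : ℝ)
  set Φ : ℝ := ANND (degOf g) g k with hΦ
  have hE : 0 ≤ E := by positivity
  have hk' : (1 : ℝ) ≤ k := by exact_mod_cast hk
  have hN' : (0 : ℝ) < nodeCount (eraseDeg g) k := by exact_mod_cast hN
  have hΦ0 : 0 ≤ Φ := by rw [hΦ, ANND_eq]; positivity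
  have hsplit : ANND (eraseDeg g) (erase g) k - Φ
      = ((nbrDegSum (eraseDeg g) (erase g) k - nbrDegSum (degOf g) g k)
          + Φ * k * (nodeCount (degOf g) k - nodeCount (eraseDeg g) k))
        / (k * nodeCount (eraseDeg g) k) := by
    rw [ANND_eq (eraseDeg g), nbrDegSum_degOf_eq hM]
    field_simp
    ring
  rw [hsplit, abs_div, abs_of_pos (by positivity : (0 : ℝ) < k * nodeCount (eraseDeg g) k),
    div_le_div_iff₀ (by positivity) hN']
  have hnum : |((nbrDegSum (eraseDeg g) (erase g) k : ℝ) - nbrDegSum (degOf g) g k)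
      + Φ * k * (nodeCount (degOf g) k - nodeCount (eraseDeg g) k)| ≤ 3 * M * E * k :=
    calc _ ≤ (k + 1) * M * E + M * k * E := by
          refine (abs_add_le _ _).trans
            (add_le_add (abs_nbrDegSum_eraseDeg_sub_le hg hM k) ?_)
          rw [abs_mul, abs_of_nonneg (by positivity)]
          gcongr
          · exact ANND_degOf_le hM k
          · exact abs_nodeCount_eraseDeg_sub_le g k
      _ ≤ 3 * M * E * k := by nlinarith [mul_nonneg (Nat.cast_nonneg (α := ℝ) M) hE]
  nlinarith

end Erasure

end NearestNeighborDegree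

section RegularVariation

open Asymptotics

lemma abs_le_mul_rpow_of_doubling {l : ℝ → ℝ} {X B η : ℝ} (hX : 0 < X) (hη : 0 ≤ η)
    (hdouble : ∀ x, X ≤ x → |l (2 * x)| ≤ 2 ^ η * |l x|)
    (hB : ∀ x, X ≤ x → x ≤ 2 * X → |l x| ≤ B) {x : ℝ} (hx : X ≤ x) :
    |l x| ≤ B * (x / X) ^ η := by
  have hiter (m : ℕ) : ∀ y, X ≤ y → |l (2 ^ m * y)| ≤ (2 ^ m) ^ η * |l y| := by
    induction m with
    | zero => simp
    | succ m ih =>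
      intro y hy
      have hym : X ≤ 2 ^ m * y := hy.trans (le_mul_of_one_le_left (hX.le.trans hy)
        (one_le_pow₀ one_le_two))
      calc |l (2 ^ (m + 1) * y)| = |l (2 * (2 ^ m * y))| := by rw [pow_succ']; ring_nf
        _ ≤ 2 ^ η * |l (2 ^ m * y)| := hdouble _ hym
        _ ≤ 2 ^ η * ((2 ^ m) ^ η * |l y|) := by gcongr; exact ih y hy
        _ = (2 ^ (m + 1)) ^ η * |l y| := by
            rw [pow_succ', Real.mul_rpow (by positivity) (by positivity), mul_assoc]
  have hx0 : 0 ≤ x := hX.le.trans hx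
  obtain ⟨m, hm, hm'⟩ := exists_nat_pow_near ((one_le_div hX).2 hx) (one_lt_two (α := ℝ))
  have hpow : (0 : ℝ) < 2 ^ m := by positivity
  set y := x / 2 ^ m with hy
  have hxy : x = 2 ^ m * y := by rw [hy]; field_simp
  have hXy : X ≤ y := by rwa [hy, le_div_iff₀ hpow, ← le_div_iff₀' hX]
  have hyX : y ≤ 2 * X := by
    rw [div_lt_iff₀ hX, pow_succ] at hm'
    rw [hy, div_le_iff₀ hpow]
    linarith
  calc |l x| ≤ (2 ^ m) ^ η * |l y| := hxy ▸ hiter m y hXy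
    _ ≤ (x / X) ^ η * B := mul_le_mul
        (Real.rpow_le_rpow hpow.le hm hη) (hB y hXy hyX) (abs_nonneg _) (by positivity)
    _ = B * (x / X) ^ η := mul_comm _ _

lemma abs_le_of_monotoneOn_or_antitoneOn {l : ℝ → ℝ} {K a b x : ℝ}
    (hl : MonotoneOn l (Set.Ici K) ∨ AntitoneOn l (Set.Ici K)) (ha : K ≤ a) (hax : a ≤ x)
    (hxb : x ≤ b) : |l x| ≤ max |l a| |l b| := by
  have hx : K ≤ x := ha.trans hax
  have hb : K ≤ b := hx.trans hxb
  rcases hl with hl | hl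
  · exact abs_le_max_abs_abs (hl ha hx hax) (hl hx hb hxb)
  · rw [max_comm]
    exact abs_le_max_abs_abs (hl hx hb hxb) (hl ha hx hax)

/-- Monotonicity replaces the uniform convergence theorem in bounding `l` on `[X, 2X]`. -/
lemma SlowlyVarying.isBigO_rpow {l : ℝ → ℝ} (hl : SlowlyVarying l) (hmono : EventuallyMonotone l)
    {η : ℝ} (hη : 0 < η) : l =O[atTop] fun x => x ^ η := by
  obtain ⟨K, hK⟩ := hmono
  have hratio : ∀ᶠ x in atTop, |l (2 * x) / l x - 1| < min 1 (2 ^ η - 1) := by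
    have hpos : 0 < min 1 ((2 : ℝ) ^ η - 1) :=
      lt_min one_pos (sub_pos.2 (Real.one_lt_rpow one_lt_two hη))
    simpa [Real.dist_eq] using Metric.tendsto_nhds.1 (hl 2 two_pos) _ hpos
  obtain ⟨X, hX⟩ := eventually_atTop.1
    (hratio.and ((eventually_ge_atTop K).and (eventually_gt_atTop 0)))
  have hX0 : 0 < X := (hX X le_rfl).2.2
  have hdouble (x : ℝ) (hx : X ≤ x) : |l (2 * x)| ≤ 2 ^ η * |l x| := by
    obtain ⟨h1, h2⟩ := lt_min_iff.1 (hX x hx).1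
    have hx0 : l x ≠ 0 := fun h => by simp [h] at h1
    have hle : |l (2 * x) / l x| ≤ 2 ^ η := by
      have := abs_add_le (l (2 * x) / l x - 1) 1
      rw [sub_add_cancel, abs_one] at this
      linarith
    rwa [abs_div, div_le_iff₀ (abs_pos.2 hx0)] at hle
  refine IsBigO.of_bound (max |l X| |l (2 * X)| / X ^ η) ?_
  filter_upwards [eventually_ge_atTop X] with x hx
  have hx0 : 0 < x := hX0.trans_le hx
  rw [Real.norm_eq_abs, Real.norm_of_nonneg (by positivity)]
  calc |l x| ≤ max |l X| |l (2 * X)| * (x / X) ^ η :=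
        abs_le_mul_rpow_of_doubling hX0 hη.le hdouble
          (fun y hy hy' => abs_le_of_monotoneOn_or_antitoneOn hK (hX X le_rfl).2.1 hy hy') hx
    _ = max |l X| |l (2 * X)| / X ^ η * x ^ η := by
        rw [Real.div_rpow hx0.le hX0.le]
        ring

lemma integrable_natCast_rpow_of_regularlyVarying {ν : Measure ℕ} [IsFiniteMeasure ν]
    {l : ℝ → ℝ} (hl : SlowlyVarying l) (hmono : EventuallyMonotone l) {γ s : ℝ}
    (hν : ∀ k : ℕ, 1 ≤ k → ν.real {k} = l k * (k : ℝ) ^ (-γ - 1)) (hs : s < γ) :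
    Integrable (fun k : ℕ => (k : ℝ) ^ s) ν := by
  have hO : (fun k : ℕ => ν.real {k} * (k : ℝ) ^ s)
      =O[atTop] fun k : ℕ => (k : ℝ) ^ ((s - γ) / 2 - 1) := by
    have hl' := (hl.isBigO_rpow hmono (show 0 < (γ - s) / 2 by linarith)).comp_tendsto
      tendsto_natCast_atTop_atTop
    refine (hl'.mul (isBigO_refl (fun k : ℕ => (k : ℝ) ^ (s - γ - 1)) atTop)).congr' ?_ ?_
    · filter_upwards [eventually_ge_atTop 1] with k hk
      have hk0 : (0 : ℝ) < k := by exact_mod_cast hk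
      rw [hν k hk, mul_assoc, ← Real.rpow_add hk0, Function.comp_apply]
      ring_nf
    · filter_upwards [eventually_ge_atTop 1] with k hk
      have hk0 : (0 : ℝ) < k := by exact_mod_cast hk
      rw [Function.comp_apply, ← Real.rpow_add hk0]
      ring_nf
  have hsum : Summable fun k : ℕ => ν.real {k} * (k : ℝ) ^ s :=
    summable_of_isBigO_nat (Real.summable_nat_rpow.2 (by linarith)) hO
  refine ⟨Measurable.of_discrete.aestronglyMeasurable, ?_⟩
  rw [HasFiniteIntegral, lintegral_countable']
  refine lt_of_eq_of_lt (tsum_congr fun k => ?_) hsum.tsum_ofReal_lt_top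
  rw [Real.enorm_of_nonneg (by positivity), mul_comm, ENNReal.ofReal_mul measureReal_nonneg,
    ofReal_measureReal]

end RegularVariation

section ProductMeasure

open Finset ProbabilityTheory

variable {Ω : Type*} [MeasurableSpace Ω] {ν : Measure Ω} {n : ℕ}

lemma measure_pi_exists_mem_le [IsProbabilityMeasure ν] (n : ℕ) {S : Set Ω}
    (hS : MeasurableSet S) :
    Measure.pi (fun _ : Fin n => ν) {x | ∃ i, x i ∈ S} ≤ n * ν S := by
  calc Measure.pi (fun _ : Fin n => ν) {x | ∃ i, x i ∈ S}
      = Measure.pi (fun _ : Fin n => ν) (⋃ i, Function.eval i ⁻¹' S) := by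
        congr 1
        ext x
        simp
    _ ≤ ∑ i, Measure.pi (fun _ : Fin n => ν) (Function.eval i ⁻¹' S) :=
        measure_iUnion_fintype_le _ _
    _ = n * ν S := by
        simp [(measurePreserving_eval (fun _ : Fin n => ν) _).measure_preimage
          hS.nullMeasurableSet]

lemma tendsto_measure_pi_sum_le_mul [IsProbabilityMeasure ν] {f : Ω → ℝ} (hf : MemLp f 2 ν)
    {c : ℝ} (hc : c < ∫ y, f y ∂ν) :
    Tendsto (fun n : ℕ => Measure.pi (fun _ : Fin n => ν) {x | ∑ i, f (x i) ≤ c * n})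
      atTop (nhds 0) := by
  set δ := ∫ y, f y ∂ν - c
  have hδ0 : 0 < δ := sub_pos.2 hc
  have hlim : Tendsto (fun n : ℕ => ENNReal.ofReal (Var[f; ν] / δ ^ 2 / n)) atTop (nhds 0) := by
    simpa using ENNReal.tendsto_ofReal (tendsto_const_div_atTop_nhds_zero_nat (Var[f; ν] / δ ^ 2))
  refine tendsto_of_tendsto_of_tendsto_of_le_of_le' tendsto_const_nhds hlim
    (Eventually.of_forall fun _ => zero_le) ?_
  filter_upwards [eventually_gt_atTop 0] with n hn
  set X : (Fin n → Ω) → ℝ := ∑ i, fun x => f (x i) with hX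
  have hXi (i : Fin n) : MemLp (fun x : Fin n → Ω => f (x i)) 2 (Measure.pi fun _ => ν) :=
    hf.comp_measurePreserving (measurePreserving_eval (fun _ => ν) i)
  have hmean : ∫ x, X x ∂Measure.pi (fun _ => ν) = n * ∫ y, f y ∂ν := by
    simp only [hX, Finset.sum_apply]
    rw [integral_finsetSum _ fun i _ => (hXi i).integrable one_le_two]
    simp [integral_comp_eval (μ := fun _ : Fin n => ν) hf.aestronglyMeasurable]
  have hvar : Var[X; Measure.pi fun _ => ν] = n * Var[f; ν] := by
    rw [hX, variance_sum_pi fun _ => hf]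
    simp
  calc Measure.pi (fun _ : Fin n => ν) {x | ∑ i, f (x i) ≤ c * n}
      ≤ Measure.pi (fun _ : Fin n => ν)
          {x | δ * n ≤ |X x - ∫ x, X x ∂Measure.pi (fun _ => ν)|} := by
        refine measure_mono fun x hx => ?_
        rw [Set.mem_ofPred_eq] at hx ⊢
        rw [hmean, abs_sub_comm, hX, Finset.sum_apply]
        exact le_trans (by linarith) (le_abs_self _)
    _ ≤ ENNReal.ofReal (Var[X; Measure.pi fun _ => ν] / (δ * n) ^ 2) :=
        meas_ge_le_variance_div_sq (memLp_finsetSum' _ fun i _ => hXi i) (by positivity)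
    _ = ENNReal.ofReal (Var[f; ν] / δ ^ 2 / n) := by
        rw [hvar]
        congr 1
        field_simp

section TwoCoordinates

variable [IsProbabilityMeasure ν] {f : Ω → ℝ} {i j : Fin n}

lemma indepFun_comp_eval (hf : AEMeasurable f ν) (hij : i ≠ j) :
    IndepFun (fun x : Fin n → Ω => f (x i)) (fun x => f (x j)) (Measure.pi fun _ => ν) :=
  (iIndepFun_pi (X := fun _ => f) fun _ => hf).indepFun hij

lemma integrable_comp_eval_mul (hf : Integrable f ν) (hij : i ≠ j) :
    Integrable (fun x : Fin n → Ω => f (x i) * f (x j)) (Measure.pi fun _ => ν) :=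
  (indepFun_comp_eval hf.aemeasurable hij).integrable_mul
    (integrable_comp_eval hf) (integrable_comp_eval hf)

lemma integral_comp_eval_mul (hf : Integrable f ν) (hij : i ≠ j) :
    ∫ x : Fin n → Ω, f (x i) * f (x j) ∂Measure.pi (fun _ => ν) = (∫ y, f y ∂ν) ^ 2 := by
  rw [(indepFun_comp_eval hf.aemeasurable hij).integral_fun_mul_eq_mul_integral
    (integrable_comp_eval hf).aestronglyMeasurable (integrable_comp_eval hf).aestronglyMeasurable,
    integral_comp_eval hf.aestronglyMeasurable, integral_comp_eval hf.aestronglyMeasurable, sq]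

end TwoCoordinates

section ErasureBound

variable [IsProbabilityMeasure ν] {u : Ω → ℝ} {s : ℝ}

lemma integrable_erasureBound (hu : Integrable (fun y => u y ^ s) ν) (L : ℝ) :
    Integrable (fun x : Fin n → Ω => erasureBound s L fun i => u (x i))
      (Measure.pi fun _ => ν) := by
  refine Integrable.add (.const_mul (integrable_finsetSum _ fun i _ => ?_) _)
    (.const_mul (integrable_finsetSum _ fun p hp => ?_) _)
  · exact integrable_comp_eval (μ := fun _ => ν) (f := fun y => u y ^ s) hu
  · exact integrable_comp_eval_mul (f := fun y => u y ^ s) hu (mem_offDiag.1 hp).2.2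

lemma integral_erasureBound_le (hu : Integrable (fun y => u y ^ s) ν) {L : ℝ} (hL : 0 < L) :
    ∫ x : Fin n → Ω, erasureBound s L (fun i => u (x i)) ∂Measure.pi (fun _ => ν)
      ≤ 2 * L ^ (1 - s) * (n * ∫ y, u y ^ s ∂ν)
        + 4 * L ^ (-s) * (n * ∫ y, u y ^ s ∂ν) ^ 2 := by
  set m := ∫ y, u y ^ s ∂ν with hm
  have hloop (i : Fin n) : Integrable (fun x : Fin n → Ω => u (x i) ^ s) (Measure.pi fun _ => ν) :=
    integrable_comp_eval (μ := fun _ => ν) (f := fun y => u y ^ s) hu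
  have hmult (p : Fin n × Fin n) (hp : p ∈ univ.offDiag) :
      Integrable (fun x : Fin n → Ω => u (x p.1) ^ s * u (x p.2) ^ s) (Measure.pi fun _ => ν) :=
    integrable_comp_eval_mul (f := fun y => u y ^ s) hu (mem_offDiag.1 hp).2.2
  have hloops : ∫ x : Fin n → Ω, ∑ i, u (x i) ^ s ∂Measure.pi (fun _ => ν) = n * m := by
    rw [integral_finsetSum _ fun i _ => hloop i]
    simp [integral_comp_eval (μ := fun _ : Fin n => ν) hu.aestronglyMeasurable, hm]
  have hmults : ∫ x : Fin n → Ω, ∑ p ∈ univ.offDiag, u (x p.1) ^ s * u (x p.2) ^ s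
      ∂Measure.pi (fun _ => ν) ≤ (n * m) ^ 2 := by
    rw [integral_finsetSum _ hmult, sum_congr rfl fun p hp =>
      integral_comp_eval_mul (f := fun y => u y ^ s) hu (mem_offDiag.1 hp).2.2, sum_const,
      nsmul_eq_mul, mul_pow]
    gcongr
    rw [offDiag_card, card_univ, Fintype.card_fin, sq]
    exact_mod_cast Nat.sub_le _ _
  unfold erasureBound
  rw [integral_add ((integrable_finsetSum _ fun i _ => hloop i).const_mul _)
    ((integrable_finsetSum _ hmult).const_mul _), integral_const_mul, integral_const_mul, hloops]
  gcongr

end ErasureBound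

end ProductMeasure

section ConfigurationModelLaw

open Finset

section ParityFix

variable {n : ℕ}

lemma parityFix_le (x : Fin n → ℕ) (i : Fin n) : parityFix n x i ≤ x i + 1 := by
  unfold parityFix
  split_ifs <;> omega

lemma parityFix_apply_of_ne {x : Fin n → ℕ} {i : Fin n} (hi : (i : ℕ) ≠ n - 1) :
    parityFix n x i = x i :=
  if_neg fun h => hi h.1

lemma nodeCount_le_nodeCount_parityFix_add_one (x : Fin n → ℕ) (k : ℕ) :
    nodeCount x k ≤ nodeCount (parityFix n x) k + 1 := by
  have hlast : #{i : Fin n | (i : ℕ) = n - 1} ≤ 1 :=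
    card_le_one.2 fun i hi j hj => Fin.ext ((mem_filter.1 hi).2.trans (mem_filter.1 hj).2.symm)
  refine (card_le_card fun i hi => ?_).trans
    ((card_union_le _ _).trans (Nat.add_le_add_left hlast (nodeCount (parityFix n x) k)))
  have hik : x i = k := (mem_filter.1 hi).2
  by_cases hi : (i : ℕ) = n - 1
  · exact mem_union_right _ (mem_filter.2 ⟨mem_univ _, hi⟩)
  · exact mem_union_left _ (mem_filter.2 ⟨mem_univ _, (parityFix_apply_of_ne hi).trans hik⟩)

end ParityFix

section Probabilities

variable {n : ℕ} {ν : Measure ℕ}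

lemma cmLaw_apply (S : Set ((Fin n → ℕ) × (Fin n → Fin n → ℕ))) :
    cmLaw n ν S = ∫⁻ x, uniformMatching (parityFix n x)
      {σ | (parityFix n x, cmEdges (parityFix n x) σ) ∈ S} ∂Measure.pi fun _ => ν := by
  have hS : MeasurableSet S := (Set.to_countable S).measurableSet
  rw [cmLaw, iidLaw, Measure.bind_apply hS (measurable_of_countable _).aemeasurable,
    lintegral_map (measurable_of_countable _) (measurable_of_countable _)]
  exact lintegral_congr fun x => Measure.map_apply measurable_from_top hS

lemma ae_cmLaw_of_forall {P : (Fin n → ℕ) × (Fin n → Fin n → ℕ) → Prop}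
    (hP : ∀ d σ, P (d, cmEdges d σ)) : ∀ᵐ p ∂cmLaw n ν, P p := by
  rw [ae_iff, cmLaw_apply]
  simp [hP]

lemma cmLaw_fst_mem_le (S : Set (Fin n → ℕ)) :
    cmLaw n ν {p | p.1 ∈ S} ≤ Measure.pi (fun _ => ν) {x | parityFix n x ∈ S} := by
  rw [cmLaw_apply, ← lintegral_indicator_one (Set.to_countable _).measurableSet]
  refine lintegral_mono fun x => ?_
  by_cases hx : parityFix n x ∈ S
  · rw [Set.indicator_of_mem (by exact hx)]
    exact uniformMatching_le_one _ _
  · simp [hx]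

variable [IsProbabilityMeasure ν] {s : ℝ}

lemma cmLaw_exists_lt_fst_le (hs : 0 ≤ s) (hν : Integrable (fun y : ℕ => ((y : ℝ) + 1) ^ s) ν)
    {t : ℝ} (ht : 0 < t) :
    cmLaw n ν {p | ∃ i, t < p.1 i}
      ≤ ENNReal.ofReal (n * ((∫ y : ℕ, ((y : ℝ) + 1) ^ s ∂ν) / t ^ s)) := by
  have hMarkov : ν.real {y : ℕ | t ^ s ≤ ((y : ℝ) + 1) ^ s}
      ≤ (∫ y : ℕ, ((y : ℝ) + 1) ^ s ∂ν) / t ^ s := by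
    rw [le_div_iff₀' (by positivity)]
    exact mul_meas_ge_le_integral_of_nonneg (Eventually.of_forall fun y => by positivity) hν _
  calc cmLaw n ν {p | ∃ i, t < p.1 i}
      ≤ Measure.pi (fun _ => ν) {x | ∃ i, t < parityFix n x i} :=
        cmLaw_fst_mem_le {d | ∃ i, t < d i}
    _ ≤ Measure.pi (fun _ => ν)
          {x : Fin n → ℕ | ∃ i, x i ∈ {y : ℕ | t ^ s ≤ ((y : ℝ) + 1) ^ s}} := by
        refine measure_mono fun x ⟨i, hi⟩ => ⟨i, Real.rpow_le_rpow ht.le ?_ hs⟩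
        exact hi.le.trans (by exact_mod_cast parityFix_le x i)
    _ ≤ n * ν {y : ℕ | t ^ s ≤ ((y : ℝ) + 1) ^ s} :=
        measure_pi_exists_mem_le n (Set.to_countable _).measurableSet
    _ ≤ ENNReal.ofReal (n * ((∫ y : ℕ, ((y : ℝ) + 1) ^ s ∂ν) / t ^ s)) := by
        rw [ENNReal.ofReal_mul (Nat.cast_nonneg n), ENNReal.ofReal_natCast, ← ofReal_measureReal]
        gcongr

lemma cmLaw_lt_erasedStubs_le (hs1 : 1 ≤ s) (hs2 : s ≤ 2)
    (hν : Integrable (fun y : ℕ => ((y : ℝ) + 1) ^ s) ν) {L b : ℝ} (hL : 6 ≤ L) (hb : 0 < b) :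
    cmLaw n ν {p | L ≤ degSum p.1 ∧ b < ∑ i, (erasedStubs p.2 i : ℝ)}
      ≤ ENNReal.ofReal ((2 * L ^ (1 - s) * (n * ∫ y : ℕ, ((y : ℝ) + 1) ^ s ∂ν)
          + 4 * L ^ (-s) * (n * ∫ y : ℕ, ((y : ℝ) + 1) ^ s ∂ν) ^ 2) / b) := by
  have hL0 : 0 < L := by linarith
  set B : (Fin n → ℕ) → ℝ := fun x => erasureBound s L fun i => (x i : ℝ) + 1 with hB
  have hcond (d : Fin n → ℕ) (hd : L ≤ degSum d) :
      uniformMatching d {σ | b < ∑ i, (erasedStubs (cmEdges d σ) i : ℝ)}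
        ≤ ENNReal.ofReal (erasureBound s (degSum d) (fun i => d i) / b) := by
    refine (uniformMatching_lt_le d (fun σ => by positivity) hb).trans ?_
    gcongr
    exact_mod_cast expect_sum_erasedStubs_le hs1 hs2 (by exact_mod_cast hL.trans hd)
  have hpoint (x : Fin n → ℕ) : uniformMatching (parityFix n x)
      {σ | (parityFix n x, cmEdges (parityFix n x) σ) ∈
        {p : (Fin n → ℕ) × (Fin n → Fin n → ℕ) |
          L ≤ degSum p.1 ∧ b < ∑ i, (erasedStubs p.2 i : ℝ)}}
      ≤ ENNReal.ofReal (B x / b) := by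
    by_cases hd : L ≤ degSum (parityFix n x)
    · simp only [Set.mem_ofPred_eq, hd, true_and]
      refine (hcond _ hd).trans ?_
      gcongr
      exact erasureBound_mono hs1 hL0 hd (fun i => by positivity)
        fun i => by exact_mod_cast parityFix_le x i
    · simp [hd]
  have hB0 (x : Fin n → ℕ) : 0 ≤ B x := by
    simp only [hB, erasureBound]
    positivity
  rw [cmLaw_apply]
  calc _ ≤ ∫⁻ x, ENNReal.ofReal (B x / b) ∂Measure.pi fun _ => ν := lintegral_mono hpoint
    _ = ENNReal.ofReal ((∫ x, B x ∂Measure.pi fun _ => ν) / b) := by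
        rw [← integral_div, ofReal_integral_eq_lintegral_ofReal]
        · exact (integrable_erasureBound (u := fun y : ℕ => (y : ℝ) + 1) hν L).div_const b
        · exact Eventually.of_forall fun x => div_nonneg (hB0 x) hb.le
    _ ≤ _ := by
        gcongr
        exact integral_erasureBound_le (u := fun y : ℕ => (y : ℝ) + 1) hν hL0

end Probabilities

section Asymptotic

lemma tendsto_natCast_rpow_atTop_zero {e : ℝ} (he : e < 0) :
    Tendsto (fun n : ℕ => (n : ℝ) ^ e) atTop (nhds 0) := by
  simpa [Function.comp_def] using
    (tendsto_rpow_neg_atTop (neg_pos.2 he)).comp tendsto_natCast_atTop_atTop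

lemma tendsto_ofReal_mul_natCast_rpow_atTop_zero (C : ℝ) {e : ℝ} (he : e < 0) :
    Tendsto (fun n : ℕ => ENNReal.ofReal (C * (n : ℝ) ^ e)) atTop (nhds 0) := by
  simpa using ENNReal.tendsto_ofReal ((tendsto_natCast_rpow_atTop_zero he).const_mul C)

lemma integrable_natCast_add_one_rpow {ν : Measure ℕ} [IsFiniteMeasure ν] {s : ℝ} (hs : 0 ≤ s)
    (hν : Integrable (fun y : ℕ => (y : ℝ) ^ s) ν) :
    Integrable (fun y : ℕ => ((y : ℝ) + 1) ^ s) ν := by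
  refine ((hν.const_mul (2 ^ s)).add (integrable_const 1)).mono'
    Measurable.of_discrete.aestronglyMeasurable (Eventually.of_forall fun y => ?_)
  rw [Real.norm_of_nonneg (by positivity), Pi.add_apply]
  rcases Nat.eq_zero_or_pos y with rfl | hy
  · simpa using by positivity
  · rw [← Real.mul_rpow zero_le_two (Nat.cast_nonneg y)]
    have hle : (y : ℝ) + 1 ≤ 2 * y := by exact_mod_cast (show y + 1 ≤ 2 * y by omega)
    exact (Real.rpow_le_rpow (by positivity) hle hs).trans (le_add_of_nonneg_right zero_le_one)

variable {ν : Measure ℕ} [IsProbabilityMeasure ν]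

lemma tendsto_cmLaw_exists_rpow_lt_fst {s α : ℝ} (hs : 0 ≤ s)
    (hν : Integrable (fun y : ℕ => (y : ℝ) ^ s) ν) (hαs : 1 < α * s) :
    Tendsto (fun n : ℕ => cmLaw n ν {p | ∃ i, (n : ℝ) ^ α < p.1 i}) atTop (nhds 0) := by
  set m := ∫ y : ℕ, ((y : ℝ) + 1) ^ s ∂ν
  refine tendsto_of_tendsto_of_tendsto_of_le_of_le' tendsto_const_nhds
    (tendsto_ofReal_mul_natCast_rpow_atTop_zero m (e := 1 - α * s) (by linarith))
    (Eventually.of_forall fun _ => zero_le) ?_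
  filter_upwards [eventually_gt_atTop 0] with n hn
  have hn' : (0 : ℝ) < n := by exact_mod_cast hn
  refine (cmLaw_exists_lt_fst_le hs (integrable_natCast_add_one_rpow hs hν)
    (by positivity)).trans_eq ?_
  rw [← Real.rpow_mul hn'.le, Real.rpow_sub hn', Real.rpow_one]
  congr 1
  ring

lemma tendsto_cmLaw_nodeCount_le {k : ℕ} {c : ℝ} (hc : c < ν.real {k}) :
    Tendsto (fun n : ℕ => cmLaw n ν {p | (nodeCount p.1 k : ℝ) ≤ c * n}) atTop (nhds 0) := by
  obtain ⟨c', hcc', hc'⟩ := exists_between hc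
  set f : ℕ → ℝ := Set.indicator {k} 1 with hf
  have hlaw := tendsto_measure_pi_sum_le_mul (ν := ν) (f := f)
    (memLp_indicator_const 2 (MeasurableSet.of_discrete) 1 (Or.inr (measure_ne_top _ _)))
    (c := c') (by rwa [hf, integral_indicator_one (MeasurableSet.of_discrete)])
  refine tendsto_of_tendsto_of_tendsto_of_le_of_le' tendsto_const_nhds hlaw
    (Eventually.of_forall fun _ => zero_le) ?_
  have hlarge : ∀ᶠ n : ℕ in atTop, 1 / (c' - c) ≤ n :=
    tendsto_natCast_atTop_atTop.eventually_ge_atTop _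
  filter_upwards [hlarge] with n hn
  rw [div_le_iff₀ (sub_pos.2 hcc')] at hn
  refine (cmLaw_fst_mem_le {d | (nodeCount d k : ℝ) ≤ c * n}).trans (measure_mono fun x hx => ?_)
  have hcount : ∑ i, f (x i) = nodeCount x k := by
    simp only [hf, nodeCount, card_filter, Set.indicator_apply, Set.mem_singleton_iff,
      Pi.one_apply, Nat.cast_sum, Nat.cast_ite, Nat.cast_one, Nat.cast_zero]
  have hparity : (nodeCount x k : ℝ) ≤ nodeCount (parityFix n x) k + 1 := by
    exact_mod_cast nodeCount_le_nodeCount_parityFix_add_one x k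
  have hx' : (nodeCount (parityFix n x) k : ℝ) ≤ c * n := hx
  rw [Set.mem_ofPred_eq, hcount]
  linarith

lemma cmLaw_rpow_lt_erasedStubs_le {n : ℕ} {s β c : ℝ} (hs1 : 1 ≤ s) (hs2 : s ≤ 2)
    (hν : Integrable (fun y : ℕ => ((y : ℝ) + 1) ^ s) ν) (hc : 0 < c) (hn : 6 ≤ c * n) :
    cmLaw n ν {p | c * n ≤ degSum p.1 ∧ (n : ℝ) ^ β < ∑ i, (erasedStubs p.2 i : ℝ)}
      ≤ ENNReal.ofReal ((2 * c ^ (1 - s) * (∫ y : ℕ, ((y : ℝ) + 1) ^ s ∂ν)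
          + 4 * c ^ (-s) * (∫ y : ℕ, ((y : ℝ) + 1) ^ s ∂ν) ^ 2) * (n : ℝ) ^ (2 - s - β)) := by
  set m := ∫ y : ℕ, ((y : ℝ) + 1) ^ s ∂ν
  have hn0 : (0 : ℝ) < n := pos_of_mul_pos_right (by linarith : 0 < c * (n : ℝ)) hc.le
  refine (cmLaw_lt_erasedStubs_le hs1 hs2 hν hn (by positivity)).trans_eq ?_
  congr 1
  have hn1 : (n : ℝ) ^ (1 - s) * n = (n : ℝ) ^ (2 - s) := by
    rw [← Real.rpow_add_one hn0.ne']
    ring_nf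
  have hn2 : (n : ℝ) ^ (-s) * (n : ℝ) ^ 2 = (n : ℝ) ^ (2 - s) := by
    rw [← Real.rpow_two, ← Real.rpow_add hn0, neg_add_eq_sub]
  rw [Real.mul_rpow hc.le hn0.le, Real.mul_rpow hc.le hn0.le, Real.rpow_sub hn0 (2 - s)]
  linear_combination (2 * c ^ (1 - s) * m * hn1 + 4 * c ^ (-s) * m ^ 2 * hn2) / (n : ℝ) ^ β

lemma tendsto_cmLaw_rpow_lt_erasedStubs {k : ℕ} (hk : 1 ≤ k) (hνk : 0 < ν.real {k}) {s β : ℝ}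
    (hs1 : 1 ≤ s) (hs2 : s ≤ 2) (hν : Integrable (fun y : ℕ => (y : ℝ) ^ s) ν) (hβ : 2 - s < β) :
    Tendsto (fun n : ℕ => cmLaw n ν {p | (n : ℝ) ^ β < ∑ i, (erasedStubs p.2 i : ℝ)})
      atTop (nhds 0) := by
  obtain ⟨c, hc0, hc⟩ := exists_between hνk
  have hlim := (tendsto_cmLaw_nodeCount_le hc).add
    (tendsto_ofReal_mul_natCast_rpow_atTop_zero
      (2 * c ^ (1 - s) * (∫ y : ℕ, ((y : ℝ) + 1) ^ s ∂ν)
        + 4 * c ^ (-s) * (∫ y : ℕ, ((y : ℝ) + 1) ^ s ∂ν) ^ 2)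
      (show 2 - s - β < 0 by linarith))
  rw [add_zero] at hlim
  refine tendsto_of_tendsto_of_tendsto_of_le_of_le' tendsto_const_nhds hlim
    (Eventually.of_forall fun _ => zero_le) ?_
  have hlarge : ∀ᶠ n : ℕ in atTop, 6 / c ≤ n := tendsto_natCast_atTop_atTop.eventually_ge_atTop _
  filter_upwards [hlarge] with n hn
  rw [div_le_iff₀' hc0] at hn
  have hcover : {p : (Fin n → ℕ) × (Fin n → Fin n → ℕ) |
        (n : ℝ) ^ β < ∑ i, (erasedStubs p.2 i : ℝ)}
      ⊆ {p | (nodeCount p.1 k : ℝ) ≤ c * n}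
        ∪ {p | c * n ≤ degSum p.1 ∧ (n : ℝ) ^ β < ∑ i, (erasedStubs p.2 i : ℝ)} := by
    intro p hp
    refine or_iff_not_imp_left.2 fun hcount => ⟨(not_le.1 hcount).le.trans ?_, hp⟩
    exact_mod_cast (Nat.le_mul_of_pos_left _ hk).trans (mul_nodeCount_le_degSum p.1 k)
  refine (measure_mono hcover).trans ((measure_union_le _ _).trans ?_)
  gcongr
  exact cmLaw_rpow_lt_erasedStubs_le hs1 hs2
    (integrable_natCast_add_one_rpow (by linarith) hν) hc0 hn

end Asymptotic

end ConfigurationModelLaw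

section ErasedConfigurationModel

lemma abs_ANND_erase_sub_le_div {n k : ℕ} {g : Fin n → Fin n → ℕ} (hg : ∀ i j, g i j = g j i)
    {A B N : ℝ} (hA0 : 0 ≤ A) (hA : ∀ i, (degOf g i : ℝ) ≤ A) (hk : 1 ≤ k)
    (hB : ∑ i, (erasedStubs g i : ℝ) ≤ B) (hN0 : 0 < N) (hN : N ≤ nodeCount (degOf g) k)
    (hBN : 2 * B ≤ N) :
    |ANND (eraseDeg g) (erase g) k - ANND (degOf g) g k| ≤ 6 * A * B / N := by
  have hcount : N / 2 ≤ nodeCount (eraseDeg g) k := by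
    have := (abs_le.1 (abs_nodeCount_eraseDeg_sub_le g k)).2
    linarith
  have hcount0 : 0 < nodeCount (eraseDeg g) k := by
    exact_mod_cast (half_pos hN0).trans_le hcount
  calc |ANND (eraseDeg g) (erase g) k - ANND (degOf g) g k|
      ≤ 3 * ⌊A⌋₊ * (∑ i, (erasedStubs g i : ℝ)) / nodeCount (eraseDeg g) k :=
        abs_ANND_erase_sub_le hg (fun i => Nat.le_floor (hA i)) hk hcount0
    _ ≤ 3 * A * B / (N / 2) := by
        have hfloor : (⌊A⌋₊ : ℝ) ≤ A := Nat.floor_le hA0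
        have hB0 : 0 ≤ B := hB.trans' (by positivity)
        gcongr
    _ = 6 * A * B / N := by ring

lemma cmLaw_lt_abs_ANND_erase_sub_le {ν : Measure ℕ} {n k : ℕ} (hk : 1 ≤ k) {A B N T : ℝ}
    (hA0 : 0 ≤ A) (hN0 : 0 < N) (hBN : 2 * B ≤ N) (hT : 6 * A * B / N ≤ T) :
    cmLaw n ν {p | T < |ANND (eraseDeg p.2) (erase p.2) k - ANND p.1 p.2 k|}
      ≤ cmLaw n ν {p | ∃ i, A < p.1 i} + cmLaw n ν {p | (nodeCount p.1 k : ℝ) ≤ N}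
        + cmLaw n ν {p | B < ∑ i, (erasedStubs p.2 i : ℝ)} := by
  refine (measure_mono_ae ?_).trans ((measure_union_le _ _).trans
    (add_le_add_left (measure_union_le _ _) _))
  have hcm : ∀ᵐ p ∂cmLaw n ν, (∀ i j, p.2 i j = p.2 j i) ∧ degOf p.2 = p.1 :=
    ae_cmLaw_of_forall fun d σ => ⟨cmEdges_comm d σ, degOf_cmEdges d σ⟩
  filter_upwards [hcm] with ⟨d, g⟩ ⟨hsymm, hdeg⟩ hp
  obtain rfl : degOf g = d := hdeg
  by_contra hgood
  obtain ⟨hAN, hB⟩ := not_or.1 hgood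
  obtain ⟨hA, hN⟩ := not_or.1 hAN
  exact not_le_of_gt hp <| (abs_ANND_erase_sub_le_div hsymm hA0
    (fun i => not_lt.1 fun hi => hA ⟨i, hi⟩) hk (not_lt.1 hB) hN0 (not_le.1 hN).le hBN).trans hT

/-- Any `s` close to `γ`, `α` close to `1 / γ` and `β` close to `2 - γ` will do, as the last
inequality then tends to `1 / γ + 1 - γ < τ`. -/
lemma exists_exponents {γ τ : ℝ} (hγ : 1 < γ) (hτ : 1 / γ + 1 - γ < τ) :
    ∃ s α β : ℝ, 1 < s ∧ s < γ ∧ 1 < α * s ∧ 2 - s < β ∧ β < 1 ∧ α + β - 1 < τ := by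
  obtain ⟨δ, hδ0, hδ⟩ : ∃ δ, 0 < δ ∧ δ < min ((γ - 1) / 3) ((τ - (1 / γ + 1 - γ)) / 3) :=
    exists_between (lt_min (by linarith) (by linarith))
  obtain ⟨hδγ, hδτ⟩ := lt_min_iff.1 hδ
  have hinv : 1 / γ < 1 := (div_lt_one (by linarith)).2 hγ
  refine ⟨γ - δ, 1 / γ + δ, 2 - (γ - δ) + δ, by linarith, by linarith, ?_, by linarith,
    by linarith, by linarith⟩
  have hαs : (1 / γ + δ) * (γ - δ) = 1 + δ * (γ - 1 / γ - δ) := by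
    field_simp
    ring
  have hpos : 0 < δ * (γ - 1 / γ - δ) := mul_pos hδ0 (by linarith)
  linarith

lemma eventually_mul_natCast_rpow_le_rpow (C : ℝ) {e e' : ℝ} (he : e < e') :
    ∀ᶠ n : ℕ in atTop, C * (n : ℝ) ^ e ≤ (n : ℝ) ^ e' := by
  have hlim := (tendsto_natCast_rpow_atTop_zero (sub_neg.2 he)).const_mul C
  rw [mul_zero] at hlim
  filter_upwards [hlim.eventually_le_const one_pos, eventually_gt_atTop 0] with n hn hn0
  have hn' : (0 : ℝ) < n := by exact_mod_cast hn0
  rwa [Real.rpow_sub hn', ← mul_div_assoc, div_le_one (by positivity)] at hn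

end ErasedConfigurationModel

lemma one_le_and_pos_of_sizeBiased_pos {f : ℕ → ℝ} (hf : ∀ k, 0 ≤ f k) {k : ℕ}
    (hk : 0 < sizeBiased f k) : 1 ≤ k ∧ 0 < f k := by
  have hne : (k : ℝ) * f k ≠ 0 := (div_ne_zero_iff.1 hk.ne').1
  exact ⟨Nat.one_le_iff_ne_zero.2 (Nat.cast_ne_zero.1 (left_ne_zero_of_mul hne)),
    (hf k).lt_of_ne' (right_ne_zero_of_mul hne)⟩

lemma critical_exponent_lt {γ : ℝ} (hγ : 1 < γ) :
    1 / γ + 1 - γ < 2 / γ - 1 - (γ - 1) ^ 2 / (2 * γ) := by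
  have hgap : 2 / γ - 1 - (γ - 1) ^ 2 / (2 * γ) = 1 / γ + 1 - γ + (γ - 1) ^ 2 / (2 * γ) := by
    field_simp
    ring
  have hpos : 0 < (γ - 1) ^ 2 / (2 * γ) := div_pos (pow_pos (sub_pos.2 hγ) 2) (by linarith)
  linarith

theorem stmt7_general (ν : Measure ℕ) [IsProbabilityMeasure ν] {γ τ : ℝ} (hγ1 : 1 < γ)
    (hγ2 : γ ≤ 2) (hmoment : ∀ s, 1 < s → s < γ → Integrable (fun y : ℕ => (y : ℝ) ^ s) ν)
    {k : ℕ} (hk : 0 < sizeBiased (fun j => ν.real {j}) k) (hτ : 1 / γ + 1 - γ < τ) :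
    Tendsto (fun n : ℕ => cmLaw n ν
        {p | (n : ℝ) ^ τ < |ANND (eraseDeg p.2) (erase p.2) k - ANND p.1 p.2 k|})
      atTop (nhds 0) := by
  obtain ⟨s, α, β, hs1, hsγ, hαs, hβs, hβ1, hαβ⟩ := exists_exponents hγ1 hτ
  obtain ⟨hk1, hνk⟩ := one_le_and_pos_of_sizeBiased_pos (fun _ => measureReal_nonneg) hk
  have hs := hmoment s hs1 hsγ
  obtain ⟨c, hc0, hc⟩ := exists_between hνk
  have hlim := ((tendsto_cmLaw_exists_rpow_lt_fst (by linarith) hs hαs).add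
    (tendsto_cmLaw_nodeCount_le hc)).add
    (tendsto_cmLaw_rpow_lt_erasedStubs hk1 hνk hs1.le (by linarith) hs hβs)
  simp only [add_zero] at hlim
  refine tendsto_of_tendsto_of_tendsto_of_le_of_le' tendsto_const_nhds hlim
    (Eventually.of_forall fun _ => zero_le) ?_
  filter_upwards [eventually_mul_natCast_rpow_le_rpow (2 / c) hβ1,
    eventually_mul_natCast_rpow_le_rpow (6 / c) hαβ, eventually_gt_atTop 0] with n hnβ hnτ hn
  have hn' : (0 : ℝ) < n := by exact_mod_cast hn
  have hE : 2 * (n : ℝ) ^ β ≤ c * n := by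
    rwa [Real.rpow_one, div_mul_eq_mul_div, div_le_iff₀' hc0] at hnβ
  have hbound : 6 * (n : ℝ) ^ α * (n : ℝ) ^ β / (c * n) ≤ (n : ℝ) ^ τ := by
    rw [Real.rpow_sub_one hn'.ne', Real.rpow_add hn'] at hnτ
    exact le_of_eq_of_le (by ring) hnτ
  exact cmLaw_lt_abs_ANND_erase_sub_le hk1 (by positivity) (by positivity) hE hbound

/-- For `𝒟` regularly varying with exponent `1 < γ < 2`, the difference
between the ANND in the erased configuration model and in the configuration model
satisfies `P(|Φ̂_n(k) − Φ_n(k)| > n^{2/γ − 1 − a}) → 0`, where `a = (γ−1)²/(2γ)` and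
`k` is such that `f^*(k) > 0`. -/
theorem stmt7 (ν : Measure ℕ) [IsProbabilityMeasure ν] (f : ℕ → ℝ)
    (hf : ∀ k, f k = (ν {k}).toReal) (hzero : ν {0} = 0)
    (γ : ℝ) (hγ1 : 1 < γ) (hγ2 : γ < 2)
    (l : ℝ → ℝ) (hsv : SlowlyVarying l) (hmono : EventuallyMonotone l)
    (hreg : ∀ k : ℕ, 1 ≤ k → f k = l k * (k : ℝ) ^ (-γ - 1))
    (a : ℝ) (ha : a = (γ - 1) ^ 2 / (2 * γ))
    (k : ℕ) (hk : 0 < sizeBiased f k) :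
    Tendsto (fun n : ℕ =>
        ((cmLaw n ν) {p : (Fin n → ℕ) × (Fin n → Fin n → ℕ) |
            (n : ℝ) ^ (2 / γ - 1 - a) <
              |ANND (eraseDeg p.2) (erase p.2) k - ANND p.1 p.2 k|}).toReal)
      atTop (nhds 0) := by
  obtain rfl : f = fun k => ν.real {k} := funext hf
  exact (ENNReal.tendsto_toReal ENNReal.zero_ne_top).comp (stmt7_general ν hγ1 hγ2.le
    (fun s _ => integrable_natCast_rpow_of_regularlyVarying hsv hmono hreg) hk
    (ha ▸ critical_exponent_lt hγ1))

end ANNDPaper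
end
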